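/- arXiv:1701.00513 — 2 statements merged into one kernel-verified Lean document; each statement's English description precedes it below -/
import Mathlib

section
/- There exist constants c > 0 and c₁ > 0, independent of N, such that for every N ≥ 1 and every function g : U(N) → ℝ that is Lipschitz with constant L (with respect to the Frobenius metric on U(N)) and satisfies ∫ g dHaar = 0, one has ∫ exp(t g) dHaar ≤ exp(c t² L² / N) for every t ∈ ℝ, and consequently Haar{ g ≥ δ } ≤ exp(−c₁ N δ² / L²) for every δ > 0. -/
open MeasureTheory

noncomputable instance matrixMeasurableSpace {N : ℕ} :
    MeasurableSpace (Matrix (Fin N) (Fin N) ℂ) := MeasurableSpace.pi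

/-- The Frobenius norm of a square complex matrix. -/
noncomputable def frob {N : ℕ} (A : Matrix (Fin N) (Fin N) ℂ) : ℝ :=
  Real.sqrt (∑ i, ∑ j, ‖A i j‖ ^ 2)

/-- The unitary group. -/
abbrev UG (N : ℕ) := Matrix.unitaryGroup (Fin N) ℂ

/-- Complex matrices. -/
abbrev MC (N : ℕ) := Matrix (Fin N) (Fin N) ℂ

instance matrixBorel {N : ℕ} : BorelSpace (MC N) :=
  inferInstanceAs (BorelSpace (Fin N → Fin N → ℂ))

instance ugBorel {N : ℕ} : BorelSpace (UG N) :=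
  inferInstanceAs (BorelSpace (Subtype _))

instance ugT2 {N : ℕ} : T2Space (UG N) := inferInstance
instance ugTG {N : ℕ} : IsTopologicalGroup (UG N) := inferInstance
instance ugMetr {N : ℕ} : TopologicalSpace.MetrizableSpace (MC N) :=
  inferInstanceAs (TopologicalSpace.MetrizableSpace (Fin N → Fin N → ℂ))
instance ugMetr' {N : ℕ} : TopologicalSpace.MetrizableSpace (UG N) :=
  (Topology.IsEmbedding.subtypeVal (X := MC N)).metrizableSpace
instance ugSC {N : ℕ} : SecondCountableTopology (MC N) :=
  inferInstanceAs (SecondCountableTopology (Fin N → Fin N → ℂ))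
instance ugSC' {N : ℕ} : SecondCountableTopology (UG N) :=
  inferInstanceAs (SecondCountableTopology (Subtype _))

instance ugCompact {N : ℕ} : CompactSpace (UG N) := by
  have hK : IsCompact (Set.pi Set.univ
      (fun _ : Fin N => Set.pi Set.univ (fun _ : Fin N => Metric.closedBall (0:ℂ) 1))) :=
    isCompact_univ_pi (fun _ => isCompact_univ_pi (fun _ => isCompact_closedBall _ _))
  have hcl : IsClosed {A : MC N | star A * A = 1 ∧ A * star A = 1} := by
    apply IsClosed.inter
    · exact isClosed_eq (by fun_prop) continuous_const
    · exact isClosed_eq (by fun_prop) continuous_const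
  have : IsCompact (Matrix.unitaryGroup (Fin N) ℂ : Set (MC N)) := by
    refine IsCompact.of_isClosed_subset hK ?_ ?_
    · exact hcl
    · intro A hA i _ j _
      simpa using entry_norm_bound_of_unitary hA i j
  exact isCompact_iff_compactSpace.mp this

/-- Traceless skew-Hermitian matrices. -/
def su (N : ℕ) : Submodule ℝ (MC N) where
  carrier := {A | A.conjTranspose = -A ∧ A.trace = 0}
  add_mem' := by
    rintro A B ⟨h1, h2⟩ ⟨h3, h4⟩
    refine ⟨?_, ?_⟩
    · rw [Matrix.conjTranspose_add, h1, h3]; abel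
    · rw [Matrix.trace_add, h2, h4, add_zero]
  zero_mem' := by simp
  smul_mem' := by
    rintro c A ⟨h1, h2⟩
    refine ⟨?_, ?_⟩
    · rw [Matrix.conjTranspose_smul, h1]; simp
    · rw [Matrix.trace_smul, h2, smul_zero]

section expo
attribute [local instance] Matrix.linftyOpNormedRing Matrix.linftyOpNormedAlgebra

lemma exp_mem_unitary {N : ℕ} {A : MC N} (hA : A.conjTranspose = -A) :
    NormedSpace.exp A ∈ Matrix.unitaryGroup (Fin N) ℂ := by
  have h : star (NormedSpace.exp A) = NormedSpace.exp (-A) := by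
    rw [Matrix.star_eq_conjTranspose, ← Matrix.exp_conjTranspose, hA]
  have h2 : NormedSpace.exp (-A) * NormedSpace.exp A = 1 := by
    rw [← Matrix.exp_add_of_commute _ _ (Commute.neg_left (Commute.refl A))]; simp
  rw [Matrix.mem_unitaryGroup_iff', h, h2]

/-- One-parameter subgroup. -/
noncomputable def flow {N : ℕ} (A : su N) (s : ℝ) : UG N :=
  ⟨NormedSpace.exp (s • (A : MC N)), exp_mem_unitary (su N |>.smul_mem s A.2).1⟩

lemma flow_zero {N : ℕ} (A : su N) : flow A 0 = 1 := by
  apply Subtype.ext; simp [flow]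

lemma hasDerivAt_flow {N : ℕ} (A : su N) (X : UG N) (i j : Fin N) (s : ℝ) :
    HasDerivAt (fun s => ((flow A s * X : UG N) : MC N) i j)
      (((A : MC N) * ((flow A s * X : UG N) : MC N)) i j) s := by
  have h := hasDerivAt_exp_smul_const' (𝕂 := ℝ) (A : MC N) s
  have h2 : HasDerivAt (fun s => (flow A s : MC N)) ((A : MC N) * (flow A s : MC N)) s := h
  have h3 := h2.mul_const (X : MC N)
  have h4 := ((ContinuousLinearMap.proj (R := ℝ) (φ := fun _ : Fin N => ℂ) j).comp
    (ContinuousLinearMap.proj (R := ℝ) (φ := fun _ : Fin N => Fin N → ℂ) i)).hasFDerivAt.comp_hasDerivAt s h3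
  rw [Matrix.mul_assoc] at h4
  exact h4

end expo

lemma det_exp_skew {N : ℕ} {A : MC N} (hA : A.conjTranspose = -A) :
    (NormedSpace.exp A).det = Complex.exp A.trace := by
  have hH : (Complex.I • A).IsHermitian := by
    rw [Matrix.IsHermitian, Matrix.conjTranspose_smul, hA]; simp
  have key : ∀ H : MC N, H.IsHermitian → (NormedSpace.exp (-Complex.I • H)).det =
      Complex.exp (-Complex.I • H).trace := by
    intro H hH
    set V := hH.eigenvectorUnitary
    set d : Fin N → ℂ := RCLike.ofReal ∘ hH.eigenvalues
    have h1 : H = (V : MC N) * Matrix.diagonal d * star (V : MC N) := by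
      conv_lhs => rw [hH.spectral_theorem]
      rw [Unitary.conjStarAlgAut_apply]
    have hinv : (V : MC N)⁻¹ = star (V : MC N) :=
      Matrix.inv_eq_left_inv (Unitary.coe_star_mul_self V)
    have h2 : -Complex.I • H = (V : MC N) * Matrix.diagonal (-Complex.I • d) * (V : MC N)⁻¹ := by
      rw [hinv]; nth_rw 1 [h1]
      rw [Matrix.diagonal_smul]; simp [Matrix.mul_assoc]
    have hu : IsUnit (V : MC N) := Unitary.isUnit_coe
    rw [h2, Matrix.exp_conj _ _ hu, Matrix.exp_diagonal]
    rw [Matrix.trace_mul_comm, ← Matrix.mul_assoc, hinv, Unitary.coe_star_mul_self, one_mul,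
      Matrix.det_mul_right_comm, ← hinv, Matrix.mul_nonsing_inv _ ((Matrix.isUnit_iff_isUnit_det _).1 hu),
      one_mul, Matrix.det_diagonal, Matrix.trace_diagonal, Complex.exp_sum]
    simp [Complex.exp_eq_exp_ℂ, Pi.coe_exp]
  have := key _ hH
  simpa [smul_smul] using this

lemma flow_det {N : ℕ} (A : su N) (s : ℝ) : (flow A s : MC N).det = 1 := by
  have h := (su N).smul_mem s A.2
  show (NormedSpace.exp (s • (A : MC N))).det = 1
  rw [det_exp_skew h.1, h.2, Complex.exp_zero]

section cfc
open scoped Matrix.Norms.L2Operator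
lemma exists_exp {N : ℕ} (u : UG N) : ∃ H : MC N, H.IsHermitian ∧
    (u : MC N) = NormedSpace.exp (Complex.I • H) := by
  refine ⟨cfc (fun z : ℂ => ((Complex.arg z : ℝ) : ℂ)) (u : MC N), IsSelfAdjoint.cfc_arg _, ?_⟩
  have hfin : (spectrum ℂ (u : MC N)).Finite := Matrix.finite_spectrum _
  have : ContinuousOn (fun z : ℂ => ((Complex.arg z : ℝ) : ℂ)) (spectrum ℂ (u : MC N)) :=
    hfin.continuousOn _
  have : IsStarNormal (u : MC N) := inferInstance
  rw [← CFC.exp_eq_normedSpace_exp (𝕜 := ℂ), ← cfc_comp_smul .., ← cfc_comp' ..]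
  conv_lhs => rw [← cfc_id' ℂ (u : MC N)]
  refine cfc_congr fun y hy ↦ ?_
  have hy₁ : ‖y‖ = 1 := spectrum.norm_eq_one_of_unitary u.2 hy
  have : Complex.I * y.arg = Complex.log y :=
    Complex.ext (by simp [Complex.log_re, hy₁]) (by simp [Complex.log_im])
  have h0 : y ≠ 0 := by rintro rfl; simp at hy₁
  simp [← Complex.exp_eq_exp_ℂ, this, Complex.exp_log h0]
end cfc

lemma su_generate {N : ℕ} (hN : 1 ≤ N) (S : UG N) (hS : (S : MC N).det = 1) :
    ∃ A B : su N, S = flow A 1 * flow B 1 := by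
  obtain ⟨H, hH, hSe⟩ := exists_exp S
  have hN0 : (N : ℂ) ≠ 0 := by exact_mod_cast (by omega : N ≠ 0)
  have hskew : (Complex.I • H).conjTranspose = -(Complex.I • H) := by
    rw [Matrix.conjTranspose_smul, hH.eq]; simp
  have hd := det_exp_skew hskew
  rw [← hSe, hS, Matrix.trace_smul] at hd
  obtain ⟨m, hm⟩ := Complex.exp_eq_one_iff.1 hd.symm
  set τ : ℂ := H.trace with hτ
  have hτm : τ = m * (2 * Real.pi) := by
    have : Complex.I * τ = Complex.I * (m * (2 * Real.pi)) := by
      rw [← smul_eq_mul, hm]; ring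
    exact mul_left_cancel₀ Complex.I_ne_zero this
  let i0 : Fin N := ⟨0, by omega⟩
  let A0 : MC N := Complex.I • (H - (τ / N) • (1 : MC N))
  let d : Fin N → ℂ := fun j => Complex.I * (τ / N - if j = i0 then τ else 0)
  have hτr : star τ = τ := by rw [hτm]; simp
  have hA0 : A0 ∈ su N := by
    refine ⟨?_, ?_⟩
    · simp only [A0, Matrix.conjTranspose_smul, Matrix.conjTranspose_sub, hH.eq, Matrix.conjTranspose_one,
        star_div₀, hτr, star_natCast]
      simp
    · simp only [A0, Matrix.trace_smul, Matrix.trace_sub, Matrix.trace_one, Fintype.card_fin]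
      rw [← hτ]
      simp [div_mul_cancel₀ _ hN0]
  have hB0 : Matrix.diagonal d ∈ su N := by
    refine ⟨?_, ?_⟩
    · rw [Matrix.diagonal_conjTranspose, Matrix.diagonal_neg]
      congr 1; ext j
      have : star (τ / N - if j = i0 then τ else 0) = (τ / N - if j = i0 then τ else 0) := by
        split_ifs <;> simp [hτr, star_div₀]
      simp only [d, Pi.star_apply, star_mul', this, Pi.neg_apply]
      simp
    · simp only [Matrix.trace_diagonal, d, ← Finset.mul_sum, Finset.sum_sub_distrib]
      simp [mul_div_cancel₀ _ hN0]
  refine ⟨⟨A0, hA0⟩, ⟨_, hB0⟩, ?_⟩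
  apply Subtype.ext
  have hB1 : NormedSpace.exp (Matrix.diagonal d) = NormedSpace.exp ((Complex.I * (τ / N)) • (1 : MC N)) := by
    have h1 : (Complex.I * (τ / N)) • (1 : MC N) = Matrix.diagonal (fun _ => Complex.I * (τ / N)) := by
      rw [← Matrix.diagonal_one, ← Matrix.diagonal_smul]; congr 1; ext; simp
    rw [h1, Matrix.exp_diagonal, Matrix.exp_diagonal]
    congr 1; ext j
    rw [Pi.coe_exp, Pi.coe_exp, ← Complex.exp_eq_exp_ℂ]
    simp only [d]
    rw [mul_sub, Complex.exp_sub]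
    split_ifs
    · rw [← smul_eq_mul Complex.I τ, ← hd, div_one]
    · simp
  show (S : MC N) = NormedSpace.exp ((1:ℝ) • A0) * NormedSpace.exp ((1:ℝ) • Matrix.diagonal d)
  rw [one_smul, one_smul, hB1, ← Matrix.exp_add_of_commute, hSe]
  · congr 1
    simp [A0, smul_sub, smul_smul]
  · exact (Commute.one_right _).smul_right _

/-- Real coordinates on complex matrices. -/
abbrev Idx (N : ℕ) := Fin N × Fin N × Bool

/-- The coordinate vector of a matrix. -/
noncomputable def coord {N : ℕ} (X : MC N) (v : Idx N) : ℝ :=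
  match v with
  | (i, j, true) => (X i j).re
  | (i, j, false) => (X i j).im

/-- Real polynomials in the matrix coordinates. -/
abbrev RPoly (N : ℕ) := MvPolynomial (Idx N) ℝ

/-- The coordinates of `A * X` as linear forms in `X`. -/
noncomputable def lf {N : ℕ} (A : MC N) (v : Idx N) : RPoly N :=
  match v with
  | (i, j, true) => ∑ k, (MvPolynomial.C (A i k).re * MvPolynomial.X (k, j, true)
      - MvPolynomial.C (A i k).im * MvPolynomial.X (k, j, false))
  | (i, j, false) => ∑ k, (MvPolynomial.C (A i k).re * MvPolynomial.X (k, j, false)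
      + MvPolynomial.C (A i k).im * MvPolynomial.X (k, j, true))

/-- The invariant vector field `X ↦ A * X` acting on polynomials. -/
noncomputable def DD {N : ℕ} (A : MC N) : Derivation ℝ (RPoly N) (RPoly N) :=
  MvPolynomial.mkDerivation ℝ (lf A)

/-- Evaluation of a polynomial at a matrix. -/
noncomputable def ev {N : ℕ} (X : MC N) (p : RPoly N) : ℝ := MvPolynomial.eval (coord X) p

lemma ev_add {N : ℕ} (X : MC N) (p q : RPoly N) : ev X (p + q) = ev X p + ev X q := map_add _ _ _
lemma ev_sub {N : ℕ} (X : MC N) (p q : RPoly N) : ev X (p - q) = ev X p - ev X q := map_sub _ _ _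
lemma ev_neg {N : ℕ} (X : MC N) (p : RPoly N) : ev X (-p) = -ev X p := map_neg _ _
lemma ev_zero {N : ℕ} (X : MC N) : ev X 0 = 0 := map_zero _
lemma ev_mul {N : ℕ} (X : MC N) (p q : RPoly N) : ev X (p * q) = ev X p * ev X q := map_mul _ _ _
lemma ev_C {N : ℕ} (X : MC N) (r : ℝ) : ev X (MvPolynomial.C r) = r := MvPolynomial.eval_C _
lemma ev_X {N : ℕ} (X : MC N) (v : Idx N) : ev X (MvPolynomial.X v) = coord X v :=
  MvPolynomial.eval_X _
lemma ev_smul {N : ℕ} (X : MC N) (r : ℝ) (p : RPoly N) : ev X (r • p) = r * ev X p :=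
  MvPolynomial.smul_eval _ _ _
lemma ev_sum {N : ℕ} {ι : Type*} (X : MC N) (s : Finset ι) (f : ι → RPoly N) :
    ev X (∑ i ∈ s, f i) = ∑ i ∈ s, ev X (f i) := map_sum _ _ _

lemma DD_X {N : ℕ} (A : MC N) (v : Idx N) : DD A (MvPolynomial.X v) = lf A v :=
  MvPolynomial.mkDerivation_X _ _ _

lemma DD_C {N : ℕ} (A : MC N) (r : ℝ) : DD A (MvPolynomial.C r) = 0 :=
  Derivation.map_algebraMap _ _

lemma DD_add {N : ℕ} (A B : MC N) : DD (A + B) = DD A + DD B := by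
  apply MvPolynomial.derivation_ext
  rintro ⟨i, j, _ | _⟩
  · simp only [DD_X, Derivation.add_apply, lf, Matrix.add_apply, Complex.add_re, Complex.add_im,
      map_add, ← Finset.sum_add_distrib]
    exact Finset.sum_congr rfl fun _ _ => by ring
  · simp only [DD_X, Derivation.add_apply, lf, Matrix.add_apply, Complex.add_re, Complex.add_im,
      map_add, ← Finset.sum_add_distrib]
    exact Finset.sum_congr rfl fun _ _ => by ring

lemma DD_smul {N : ℕ} (c : ℝ) (A : MC N) : DD (c • A) = c • DD A := by
  apply MvPolynomial.derivation_ext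
  rintro ⟨i, j, _ | _⟩
  · simp only [DD_X, Derivation.smul_apply, lf, Matrix.smul_apply, Complex.smul_re, Complex.smul_im,
      Finset.smul_sum, MvPolynomial.smul_eq_C_mul, smul_eq_mul, map_mul]
    exact Finset.sum_congr rfl fun _ _ => by ring
  · simp only [DD_X, Derivation.smul_apply, lf, Matrix.smul_apply, Complex.smul_re, Complex.smul_im,
      Finset.smul_sum, MvPolynomial.smul_eq_C_mul, smul_eq_mul, map_mul]
    exact Finset.sum_congr rfl fun _ _ => by ring

/-- `DD` as a linear map in the direction. -/
noncomputable def DL {N : ℕ} (p : RPoly N) : MC N →ₗ[ℝ] RPoly N where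
  toFun A := DD A p
  map_add' A B := by rw [DD_add]; rfl
  map_smul' c A := by rw [DD_smul]; rfl

lemma DL_apply {N : ℕ} (p : RPoly N) (A : MC N) : DL p A = DD A p := rfl

lemma DD_lf {N : ℕ} (A B : MC N) (v : Idx N) : DD A (lf B v) = lf (B * A) v := by
  obtain ⟨i, j, _ | _⟩ := v
  · simp only [lf, map_sum, map_add, Derivation.leibniz, DD_C, DD_X, smul_zero, mul_zero, add_zero,
      Matrix.mul_apply, Complex.re_sum, Complex.im_sum, Complex.mul_re, Complex.mul_im,
      smul_eq_mul, Finset.mul_sum, Finset.sum_mul, ← Finset.sum_add_distrib, map_sub, map_mul]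
    rw [Finset.sum_comm]
    exact Finset.sum_congr rfl fun _ _ => Finset.sum_congr rfl fun _ _ => by ring
  · simp only [lf, map_sum, map_add, Derivation.leibniz, DD_C, DD_X, smul_zero, mul_zero, add_zero,
      Matrix.mul_apply, Complex.re_sum, Complex.im_sum, Complex.mul_re, Complex.mul_im,
      smul_eq_mul, Finset.mul_sum, Finset.sum_mul, ← Finset.sum_sub_distrib, map_sub, map_mul]
    rw [Finset.sum_comm]
    exact Finset.sum_congr rfl fun _ _ => Finset.sum_congr rfl fun _ _ => by ring

lemma DD_comm {N : ℕ} (A B : MC N) (p : RPoly N) :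
    DD A (DD B p) - DD B (DD A p) = DD (B * A - A * B) p := by
  have h : ⁅DD A, DD B⁆ = DD (B * A - A * B) := by
    apply MvPolynomial.derivation_ext
    intro v
    rw [Derivation.commutator_apply, DD_X, DD_X, DD_lf, DD_lf, ← DD_X, ← DD_X,
      ← DL_apply, ← DL_apply, ← map_sub, DL_apply]
  rw [← h, Derivation.commutator_apply]

lemma ev_lf {N : ℕ} (A X : MC N) (v : Idx N) : ev X (lf A v) = coord (A * X) v := by
  obtain ⟨i, j, _ | _⟩ := v
  · simp [ev, lf, coord, Matrix.mul_apply]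
  · simp [ev, lf, coord, Matrix.mul_apply]

lemma continuous_coord {N : ℕ} (v : Idx N) : Continuous (fun X : MC N => coord X v) := by
  obtain ⟨i, j, _ | _⟩ := v
  · exact Complex.continuous_im.comp (continuous_id.matrix_elem i j)
  · exact Complex.continuous_re.comp (continuous_id.matrix_elem i j)

lemma continuous_ev {N : ℕ} (p : RPoly N) : Continuous (fun X : MC N => ev X p) := by
  have h := MvPolynomial.continuous_eval p
  exact h.comp (continuous_pi fun v => continuous_coord v)

lemma continuous_evU {N : ℕ} (p : RPoly N) : Continuous (fun X : UG N => ev (X : MC N) p) :=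
  (continuous_ev p).comp continuous_subtype_val

lemma hasDerivAt_coord {N : ℕ} (A : su N) (X : UG N) (v : Idx N) (s : ℝ) :
    HasDerivAt (fun s => coord ((flow A s * X : UG N) : MC N) v)
      (coord ((A : MC N) * ((flow A s * X : UG N) : MC N)) v) s := by
  obtain ⟨i, j, _ | _⟩ := v
  · exact Complex.imCLM.hasFDerivAt.comp_hasDerivAt s (hasDerivAt_flow A X i j s)
  · exact Complex.reCLM.hasFDerivAt.comp_hasDerivAt s (hasDerivAt_flow A X i j s)

lemma hasDerivAt_ev {N : ℕ} (A : su N) (X : UG N) (p : RPoly N) (s : ℝ) :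
    HasDerivAt (fun s => ev ((flow A s * X : UG N) : MC N) p)
      (ev ((flow A s * X : UG N) : MC N) (DD (A : MC N) p)) s := by
  induction p using MvPolynomial.induction_on with
  | C a => simpa only [ev_C, DD_C, ev_zero] using hasDerivAt_const s a
  | add p q hp hq => simp only [ev_add, map_add]; exact hp.add hq
  | mul_X p v hp =>
    have h := hp.mul (hasDerivAt_coord A X v s)
    rw [← ev_lf] at h
    simp only [ev_mul, ev_X, Derivation.leibniz, DD_X, smul_eq_mul, ev_add]
    refine h.congr_deriv ?_
    ring

lemma totalDegree_lf {N : ℕ} (A : MC N) (v : Idx N) : (lf A v).totalDegree ≤ 1 := by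
  have h : ∀ (a : ℝ) (w : Idx N),
      MvPolynomial.C a * MvPolynomial.X w ∈ MvPolynomial.restrictTotalDegree (Idx N) ℝ 1 := by
    intro a w
    rw [MvPolynomial.mem_restrictTotalDegree]
    refine (MvPolynomial.totalDegree_mul _ _).trans ?_
    simp
  rw [← MvPolynomial.mem_restrictTotalDegree]
  obtain ⟨i, j, _ | _⟩ := v
  · exact Submodule.sum_mem _ fun k _ => Submodule.add_mem _ (h _ _) (h _ _)
  · exact Submodule.sum_mem _ fun k _ => Submodule.sub_mem _ (h _ _) (h _ _)

lemma DD_degree {N : ℕ} (A : MC N) (m : ℕ) (p : RPoly N)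
    (hp : p ∈ MvPolynomial.restrictTotalDegree (Idx N) ℝ m) :
    DD A p ∈ MvPolynomial.restrictTotalDegree (Idx N) ℝ m := by
  rw [MvPolynomial.mem_restrictTotalDegree] at hp
  rw [p.as_sum, map_sum]
  refine Submodule.sum_mem _ fun s hs => ?_
  have hsm : s.sum (fun _ e => e) ≤ m := (MvPolynomial.le_totalDegree hs).trans hp
  rw [DD, MvPolynomial.mkDerivation_monomial]
  refine Submodule.smul_mem _ _ (Submodule.sum_mem _ fun i hi => ?_)
  rw [MvPolynomial.mem_restrictTotalDegree]
  refine (MvPolynomial.totalDegree_mul _ _).trans ?_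
  have h1 := totalDegree_lf A i
  have h2 := MvPolynomial.totalDegree_monomial_le (s - Finsupp.single i 1) ((s i : ℕ) : ℝ)
  have h3 : (s - Finsupp.single i 1).sum (fun _ e => e) + 1 = s.sum (fun _ e => e) := by
    have : s = (s - Finsupp.single i 1) + Finsupp.single i 1 := by
      rw [tsub_add_cancel_of_le]
      rw [Finsupp.single_le_iff]
      exact Nat.one_le_iff_ne_zero.2 (Finsupp.mem_support_iff.1 hi)
    conv_rhs => rw [this]
    rw [Finsupp.sum_add_index' (fun _ => rfl) (fun _ _ _ => rfl), Finsupp.sum_single_index rfl]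
  have h4 : (fun _ => id : Idx N → ℕ → ℕ) = fun _ e => e := rfl
  simp only [h4] at h2
  omega

/-- Real inner product of matrices. -/
noncomputable def ip {N : ℕ} (A B : MC N) : ℝ := ∑ v, coord A v * coord B v

lemma coord_add {N : ℕ} (A B : MC N) (v : Idx N) : coord (A + B) v = coord A v + coord B v := by
  obtain ⟨i, j, _ | _⟩ := v <;> simp [coord]
lemma coord_smul {N : ℕ} (c : ℝ) (A : MC N) (v : Idx N) : coord (c • A) v = c * coord A v := by
  obtain ⟨i, j, _ | _⟩ := v <;> simp [coord]

/-- The inner product as a linear map. -/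
noncomputable def ipL {N : ℕ} (A : MC N) : MC N →ₗ[ℝ] ℝ where
  toFun B := ip A B
  map_add' B C := by simp [ip, coord_add, mul_add, Finset.sum_add_distrib]
  map_smul' c B := by
    simp only [ip, coord_smul, Finset.mul_sum, RingHom.id_apply, smul_eq_mul]
    exact Finset.sum_congr rfl fun _ _ => by ring

lemma ipL_apply {N : ℕ} (A B : MC N) : ipL A B = ip A B := rfl

lemma ip_comm {N : ℕ} (A B : MC N) : ip A B = ip B A := by
  simp only [ip, mul_comm]

lemma sum_idx {N : ℕ} {M : Type*} [AddCommMonoid M] (f : Idx N → M) :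
    ∑ v, f v = ∑ i, ∑ j, (f (i, j, true) + f (i, j, false)) := by
  rw [Fintype.sum_prod_type]
  refine Finset.sum_congr rfl fun i _ => ?_
  rw [Fintype.sum_prod_type]
  refine Finset.sum_congr rfl fun j _ => ?_
  simp

lemma ip_self {N : ℕ} (A : MC N) : ip A A = frob A ^ 2 := by
  rw [frob, Real.sq_sqrt (by positivity), ip, sum_idx]
  refine Finset.sum_congr rfl fun i _ => Finset.sum_congr rfl fun j _ => ?_
  rw [← Complex.normSq_eq_norm_sq, Complex.normSq_apply]; rfl

lemma ip_eq_trace {N : ℕ} (A B : MC N) : ip A B = (Matrix.trace (A.conjTranspose * B)).re := by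
  rw [ip, sum_idx, Matrix.trace, Finset.sum_comm, Complex.re_sum]
  refine Finset.sum_congr rfl fun i _ => ?_
  rw [Matrix.diag_apply, Matrix.mul_apply, Complex.re_sum]
  refine Finset.sum_congr rfl fun j _ => ?_
  simp [coord]

lemma ip_su {N : ℕ} {A : MC N} (hA : A ∈ su N) (B : MC N) : ip A B = -(Matrix.trace (A * B)).re := by
  rw [ip_eq_trace, hA.1]; simp

/-- Projection on the traceless skew-Hermitian matrices. -/
noncomputable def proj {N : ℕ} (M : MC N) : MC N :=
  (1 / 2 : ℝ) • (M - M.conjTranspose) -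
    (((Matrix.trace (M - M.conjTranspose)) / (2 * N)) : ℂ) • (1 : MC N)

lemma proj_mem {N : ℕ} (hN : 1 ≤ N) (M : MC N) : proj M ∈ su N := by
  have hN0 : (N : ℂ) ≠ 0 := by exact_mod_cast (by omega : N ≠ 0)
  refine ⟨?_, ?_⟩
  · have h : star (Matrix.trace (M - M.conjTranspose)) = -Matrix.trace (M - M.conjTranspose) := by
      rw [← Matrix.trace_conjTranspose]; simp
    simp only [proj, Matrix.conjTranspose_sub, Matrix.conjTranspose_smul, Matrix.conjTranspose_conjTranspose,
      Matrix.conjTranspose_one, star_div₀, h, star_mul', star_natCast, star_ofNat]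
    simp only [star_trivial, neg_div, neg_smul, neg_sub, sub_neg_eq_add, ← Matrix.trace_sub]
    rw [← neg_sub M, smul_neg]
    abel
  · simp only [proj, Matrix.trace_sub, Matrix.trace_smul, Matrix.trace_one, Fintype.card_fin]
    rw [Complex.real_smul, smul_eq_mul]
    push_cast
    field_simp
    ring

/-- The canonical real basis of the complex matrices. -/
noncomputable def ebas {N : ℕ} (v : Idx N) : MC N :=
  match v with
  | (i, j, true) => Matrix.single i j 1
  | (i, j, false) => Matrix.single i j Complex.I

lemma ebas_sum {N : ℕ} (M : MC N) : M = ∑ v, coord M v • ebas v := by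
  rw [sum_idx]
  nth_rw 1 [Matrix.matrix_eq_sum_single M]
  refine Finset.sum_congr rfl fun i _ => Finset.sum_congr rfl fun j _ => ?_
  simp only [coord, ebas, Matrix.smul_single, ← Matrix.single_add]
  congr 1
  simp [Complex.re_add_im]

lemma ip_ebas {N : ℕ} (M : MC N) (v : Idx N) : ip M (ebas v) = coord M v := by
  have : ∀ w, coord (ebas v) w = if w = v then 1 else 0 := by
    intro w
    obtain ⟨i, j, _ | _⟩ := v <;> obtain ⟨k, l, _ | _⟩ := w <;>
      simp only [coord, ebas, Matrix.single_apply, Prod.mk.injEq, and_true, and_false, if_false, reduceCtorEq] <;>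
      split_ifs <;> simp_all
  simp [ip, this]

/-- The frame of the Lie algebra. -/
noncomputable def frm {N : ℕ} (v : Idx N) : MC N := proj (ebas v)

lemma frm_mem {N : ℕ} (hN : 1 ≤ N) (v : Idx N) : (frm v : MC N) ∈ su N := proj_mem hN _

lemma ip_proj {N : ℕ} {M : MC N} (hM : M ∈ su N) (K : MC N) : ip M (proj K) = ip M K := by
  have h1 : Matrix.trace (M * K.conjTranspose) = -star (Matrix.trace (M * K)) := by
    rw [← Matrix.trace_conjTranspose, Matrix.conjTranspose_mul, hM.1, Matrix.mul_neg, Matrix.trace_neg,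
      neg_neg, Matrix.trace_mul_comm]
  rw [ip_su hM, ip_su hM, proj, Matrix.mul_sub, Matrix.trace_sub, Matrix.mul_smul, Matrix.trace_smul,
    Matrix.mul_smul, Matrix.trace_smul, mul_one, hM.2, smul_zero, sub_zero, Matrix.mul_sub, Matrix.trace_sub,
    h1]
  simp
  ring

/-- `proj` as a linear map. -/
lemma proj_sum {N : ℕ} (c : Idx N → ℝ) (M : Idx N → MC N) :
    proj (∑ v, c v • M v) = ∑ v, c v • proj (M v) := by
  simp only [proj, Matrix.conjTranspose_sum, Matrix.conjTranspose_smul, ← Finset.sum_sub_distrib,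
    Matrix.trace_sum, star_trivial, ← smul_sub, Matrix.trace_smul, Finset.smul_sum, Finset.sum_div,
    Finset.sum_smul]
  refine Finset.sum_congr rfl fun v _ => ?_
  conv_rhs => rw [smul_sub]
  rw [smul_comm, smul_div_assoc, smul_assoc]

lemma proj_self {N : ℕ} {M : MC N} (hM : M ∈ su N) : proj M = M := by
  rw [proj, hM.1, sub_neg_eq_add, Matrix.trace_add, hM.2, ← two_smul ℝ M, smul_smul]
  simp

lemma frm_expand {N : ℕ} {M : MC N} (hM : M ∈ su N) : M = ∑ v, ip M (frm v) • frm v := by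
  have h : ∀ v, ip M (frm v) = coord M v := fun v => by rw [frm, ip_proj hM, ip_ebas]
  simp only [h]
  simp only [frm]
  rw [← proj_sum, ← ebas_sum, proj_self hM]

lemma parseval {N : ℕ} {M : MC N} (hM : M ∈ su N) : ∑ v, ip M (frm v) ^ 2 = ip M M := by
  conv_rhs => rw [← ipL_apply]; enter [2]; rw [frm_expand hM]
  rw [map_sum]
  refine Finset.sum_congr rfl fun v _ => ?_
  rw [map_smul, ipL_apply, smul_eq_mul, sq]

lemma comm_mem {N : ℕ} {A B : MC N} (hA : A ∈ su N) (hB : B ∈ su N) : A * B - B * A ∈ su N := by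
  refine ⟨?_, ?_⟩
  · rw [Matrix.conjTranspose_sub, Matrix.conjTranspose_mul, Matrix.conjTranspose_mul, hA.1, hB.1]
    simp
  · rw [Matrix.trace_sub, Matrix.trace_mul_comm, sub_self]

lemma ip_ad {N : ℕ} {A B C : MC N} (hA : A ∈ su N) (hB : B ∈ su N) :
    ip (A * B - B * A) C = ip A (B * C - C * B) := by
  rw [ip_su (comm_mem hA hB), ip_su hA, Matrix.sub_mul, Matrix.mul_sub, Matrix.trace_sub, Matrix.trace_sub,
    Matrix.mul_assoc, ← Matrix.mul_assoc A C B, Matrix.trace_mul_comm (A * C) B, Matrix.mul_assoc]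

lemma sum_ee {N : ℕ} (M : MC N) : ∑ v, ebas v * M * ebas v = 0 := by
  rw [sum_idx]
  refine Finset.sum_eq_zero fun i _ => Finset.sum_eq_zero fun j _ => ?_
  have : (Matrix.single i j Complex.I : MC N) = Complex.I • Matrix.single i j 1 := by
    rw [Matrix.smul_single, smul_eq_mul, mul_one]
  simp only [ebas, this]
  rw [Matrix.smul_mul, Matrix.smul_mul, Matrix.mul_smul, smul_smul, Complex.I_mul_I]
  simp

lemma sum_single_diag {N : ℕ} (M : MC N) :
    ∑ i, ∑ j, Matrix.single i i (2 * M j j) = (2 * M.trace) • (1 : MC N) := by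
  have h : ∀ i : Fin N, ∑ j, Matrix.single i i (2 * M j j) = Matrix.single i i (2 * M.trace) := by
    intro i
    rw [Matrix.trace, Finset.mul_sum]
    exact (map_sum (Matrix.singleAddMonoidHom (α := ℂ) i i) (fun j => 2 * M j j) Finset.univ).symm
  simp only [h]
  ext a b
  rw [Matrix.sum_apply]
  simp only [Matrix.single_apply, Matrix.smul_apply, Matrix.one_apply]
  by_cases hab : a = b
  · subst hab; simp
  · rw [Finset.sum_eq_zero]
    · simp [hab]
    · intro i _
      rw [if_neg]
      rintro ⟨rfl, rfl⟩
      exact hab rfl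

lemma sum_ees {N : ℕ} (M : MC N) :
    ∑ v, ebas v * M * (ebas v).conjTranspose = (2 * M.trace) • (1 : MC N) := by
  have h1 : ∀ i j : Fin N, ebas (i, j, true) * M * (ebas (i, j, true)).conjTranspose
     + ebas (i, j, false) * M * (ebas (i, j, false)).conjTranspose
      = Matrix.single i i (2 * M j j) := by
    intro i j
    have h0 : (Matrix.single i j Complex.I : MC N) = Complex.I • Matrix.single i j 1 := by
      rw [Matrix.smul_single, smul_eq_mul, mul_one]
    simp only [ebas, h0, Matrix.conjTranspose_smul]
    rw [Matrix.smul_mul, Matrix.smul_mul, Matrix.mul_smul, smul_smul]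
    have h2 : (Matrix.single i j 1 : MC N) * M * (Matrix.single i j 1).conjTranspose =
        Matrix.single i i (M j j) := by
      rw [Matrix.conjTranspose_single, Matrix.single_mul_mul_single]; simp
    rw [h2]; simp [two_mul, Matrix.single_add]
  rw [sum_idx]
  simp only [h1]
  exact sum_single_diag M

lemma sum_ese {N : ℕ} (M : MC N) :
    ∑ v, (ebas v).conjTranspose * M * ebas v = (2 * M.trace) • (1 : MC N) := by
  have h1 : ∀ i j : Fin N, (ebas (i, j, true)).conjTranspose * M * (ebas (i, j, true))
     + (ebas (i, j, false)).conjTranspose * M * (ebas (i, j, false))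
      = Matrix.single j j (2 * M i i) := by
    intro i j
    have h0 : (Matrix.single i j Complex.I : MC N) = Complex.I • Matrix.single i j 1 := by
      rw [Matrix.smul_single, smul_eq_mul, mul_one]
    simp only [ebas, h0, Matrix.conjTranspose_smul]
    rw [Matrix.smul_mul, Matrix.smul_mul, Matrix.mul_smul, smul_smul]
    have h2 : (Matrix.single i j 1 : MC N).conjTranspose * M * (Matrix.single i j 1) =
        Matrix.single j j (M i i) := by
      rw [Matrix.conjTranspose_single, Matrix.single_mul_mul_single]; simp
    rw [h2]; simp [two_mul, Matrix.single_add]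
  rw [sum_idx]
  simp only [h1]
  rw [Finset.sum_comm]
  exact sum_single_diag M

lemma sum_eess {N : ℕ} (M : MC N) :
    ∑ v, (ebas v).conjTranspose * M * (ebas v).conjTranspose = 0 := by
  have h := congrArg Matrix.conjTranspose (sum_ee M.conjTranspose)
  rw [Matrix.conjTranspose_sum] at h
  simpa [Matrix.conjTranspose_mul, Matrix.mul_assoc] using h

/-- Skew part of the basis. -/
noncomputable def sk {N : ℕ} (v : Idx N) : MC N := (1 / 2 : ℂ) • (ebas v - (ebas v).conjTranspose)

lemma sum_sk {N : ℕ} (M : MC N) : ∑ v, sk v * M * sk v = (-M.trace) • (1 : MC N) := by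
  have h : ∀ v, sk v * M * sk v = (1 / 4 : ℂ) • (ebas v * M * ebas v - ebas v * M * (ebas v).conjTranspose
      - (ebas v).conjTranspose * M * ebas v + (ebas v).conjTranspose * M * (ebas v).conjTranspose) := by
    intro v
    rw [sk, Matrix.smul_mul, Matrix.smul_mul, Matrix.mul_smul, smul_smul]
    congr 1
    · norm_num
    · noncomm_ring
  rw [Finset.sum_congr rfl fun v _ => h v, ← Finset.smul_sum, Finset.sum_add_distrib,
    Finset.sum_sub_distrib, Finset.sum_sub_distrib, sum_ee, sum_ees, sum_ese, sum_eess, zero_sub, add_zero,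
    ← neg_smul, ← sub_smul, smul_smul]
  congr 1
  ring

lemma killing {N : ℕ} (hN : 1 ≤ N) {G : MC N} (hG : G ∈ su N) :
    ∑ v, ip (frm v * G - G * frm v) (frm v * G - G * frm v) = 2 * N * ip G G := by
  have h1 : ∀ v : Idx N, frm v * G - G * frm v = sk v * G - G * sk v := by
    intro v
    have : (frm v : MC N) = sk v - (((Matrix.trace (ebas v - (ebas v).conjTranspose)) / (2 * N)) : ℂ) • (1 : MC N) := by
      rw [frm, proj, sk]
      congr 1
      ext i j
      simp
    rw [this, sub_mul, mul_sub, Matrix.smul_mul, Matrix.mul_smul, mul_one, one_mul]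
    abel
  have h2 : ∀ v : Idx N, Matrix.trace ((sk v * G - G * sk v) * (sk v * G - G * sk v)) =
      2 * Matrix.trace ((sk v * G * sk v) * G) - Matrix.trace (sk v * (G * G) * sk v)
        - Matrix.trace ((sk v * 1 * sk v) * (G * G)) := by
    intro v
    have e1 : (sk v * G - G * sk v) * (sk v * G - G * sk v) =
      (sk v * G * sk v) * G - sk v * (G * G) * sk v - G * (sk v * sk v * G) + G * (sk v * G * sk v) := by
      noncomm_ring
    rw [e1, Matrix.trace_add, Matrix.trace_sub, Matrix.trace_sub, Matrix.trace_mul_comm G,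
      Matrix.trace_mul_comm G, mul_one, Matrix.mul_assoc (sk v * sk v)]
    ring
  have h3 : ∀ v : Idx N, ip (frm v * G - G * frm v) (frm v * G - G * frm v) =
     -(2 * Matrix.trace ((sk v * G * sk v) * G) - Matrix.trace (sk v * (G * G) * sk v)
        - Matrix.trace ((sk v * 1 * sk v) * (G * G))).re := by
    intro v
    rw [ip_su (comm_mem (frm_mem hN v) hG), h1, h2]
  rw [Finset.sum_congr rfl fun v _ => h3 v, Finset.sum_neg_distrib, ← Complex.re_sum,
    Finset.sum_sub_distrib, Finset.sum_sub_distrib, ← Finset.mul_sum, ← Matrix.trace_sum, ← Matrix.trace_sum,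
    ← Matrix.trace_sum, ← Finset.sum_mul, ← Finset.sum_mul, sum_sk, sum_sk, sum_sk, hG.2, ip_su hG]
  simp [Matrix.trace_smul, Matrix.trace_one]
  ring

/-- The Laplacian. -/
noncomputable def Lap {N : ℕ} : RPoly N →ₗ[ℝ] RPoly N :=
  ∑ v : Idx N, ((DD (frm v) : Derivation ℝ (RPoly N) (RPoly N)) : RPoly N →ₗ[ℝ] RPoly N) ∘ₗ
    ((DD (frm v) : Derivation ℝ (RPoly N) (RPoly N)) : RPoly N →ₗ[ℝ] RPoly N)

lemma Lap_apply {N : ℕ} (p : RPoly N) : Lap p = ∑ v, DD (frm v) (DD (frm v) p) := by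
  simp [Lap]

lemma DD_expand {N : ℕ} {M : MC N} (hM : M ∈ su N) (p : RPoly N) :
    DD M p = ∑ v, ip M (frm v) • DD (frm v) p := by
  rw [← DL_apply]
  nth_rw 1 [frm_expand hM]
  simp [DL_apply]

lemma antisym_sum {ι V : Type*} [Fintype ι] [AddCommGroup V] [Module ℝ V] (k : ι → ι → ℝ)
    (F : ι → ι → V) (hk : ∀ a b, k a b = -k b a) (hF : ∀ a b, F a b = F b a) :
    ∑ a, ∑ b, k a b • F a b = 0 := by
  have h : ∑ a, ∑ b, k a b • F a b = -∑ a, ∑ b, k a b • F a b := by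
    conv_lhs => rw [Finset.sum_comm]
    rw [← Finset.sum_neg_distrib]
    refine Finset.sum_congr rfl fun a _ => ?_
    rw [← Finset.sum_neg_distrib]
    refine Finset.sum_congr rfl fun b _ => ?_
    rw [hk, hF, neg_smul]
  have h2 : (2 : ℝ) • ∑ a, ∑ b, k a b • F a b = 0 := by
    rw [two_smul]; nth_rw 1 [h]; simp
  simpa using h2

lemma Lap_comm {N : ℕ} (hN : 1 ≤ N) {A : MC N} (hA : A ∈ su N) (p : RPoly N) :
    DD A (Lap p) = Lap (DD A p) := by
  rw [← sub_eq_zero, Lap_apply, Lap_apply, map_sum, ← Finset.sum_sub_distrib]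
  have h1 : ∀ b : Idx N, DD A (DD (frm b) (DD (frm b) p)) - DD (frm b) (DD (frm b) (DD A p)) =
      ∑ c, ip (frm b * A - A * frm b) (frm c) •
        (DD (frm b) (DD (frm c) p) + DD (frm c) (DD (frm b) p)) := by
    intro b
    have hm := comm_mem (frm_mem hN b) hA
    have e1 := DD_comm A (frm b) (DD (frm b) p)
    have e2 := congrArg (DD (frm b)) (DD_comm A (frm b) p)
    rw [map_sub] at e2
    rw [DD_expand hm] at e1 e2
    rw [map_sum] at e2
    simp only [Derivation.map_smul] at e2
    simp only [smul_add, Finset.sum_add_distrib]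
    rw [← e1, ← e2]
    abel
  rw [Finset.sum_congr rfl fun b _ => h1 b]
  refine antisym_sum _ _ (fun a b => ?_) (fun a b => add_comm _ _)
  rw [ip_ad (frm_mem hN a) hA, ip_comm, ← ipL_apply, ← ipL_apply (frm b * A - A * frm b)]
  rw [ipL_apply, ipL_apply, ip_comm, ip_comm _ (frm a), ← ipL_apply, ← ipL_apply (frm a), ← map_neg,
    neg_sub]

/-- The gradient matrix. -/
noncomputable def grad {N : ℕ} (X : MC N) (u : RPoly N) : MC N := ∑ b, ev X (DD (frm b) u) • frm b

lemma grad_mem {N : ℕ} (hN : 1 ≤ N) (X : MC N) (u : RPoly N) : grad X u ∈ su N :=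
  Submodule.sum_mem _ fun b _ => Submodule.smul_mem _ _ (frm_mem hN b)

lemma ev_DD {N : ℕ} (X : MC N) (u : RPoly N) {M : MC N} (hM : M ∈ su N) :
    ev X (DD M u) = ip M (grad X u) := by
  rw [DD_expand hM, ev_sum, ← ipL_apply, grad, map_sum]
  refine Finset.sum_congr rfl fun b _ => ?_
  rw [ev_smul, map_smul, ipL_apply, smul_eq_mul, mul_comm]

lemma ip_grad {N : ℕ} (hN : 1 ≤ N) (X : MC N) (u w : RPoly N) :
    ip (grad X u) (grad X w) = ∑ b, ev X (DD (frm b) u) * ev X (DD (frm b) w) := by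
  rw [← ev_DD _ _ (grad_mem hN X u), DD_expand (grad_mem hN X u), ev_sum]
  refine Finset.sum_congr rfl fun b _ => ?_
  rw [ev_smul, ip_comm, ← ev_DD _ _ (frm_mem hN b)]

lemma ric {N : ℕ} (hN : 1 ≤ N) (X : MC N) (u : RPoly N) :
    ∑ b, ∑ a, ev X (DD (frm a * frm b - frm b * frm a) u) ^ 2 = 2 * N * ∑ b, ev X (DD (frm b) u) ^ 2 := by
  have e : ∑ b, ev X (DD (frm b) u) ^ 2 = ip (grad X u) (grad X u) := by
    rw [ip_grad hN]; simp only [sq]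
  rw [e, ← killing hN (grad_mem hN X u)]
  refine Finset.sum_congr rfl fun b _ => ?_
  rw [← parseval (comm_mem (frm_mem hN b) (grad_mem hN X u))]
  refine Finset.sum_congr rfl fun a _ => ?_
  rw [ev_DD _ _ (comm_mem (frm_mem hN a) (frm_mem hN b)), ip_ad (frm_mem hN a) (frm_mem hN b), ip_comm]

lemma bochner {N : ℕ} (hN : 1 ≤ N) (X : MC N) (u : RPoly N) :
    (N : ℝ) / 2 * ∑ b, ev X (DD (frm b) u) ^ 2 ≤ ∑ b, ∑ a, ev X (DD (frm b) (DD (frm a) u)) ^ 2 := by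
  have h := ric hN X u
  have h1 : ∑ b, ∑ a, ev X (DD (frm a * frm b - frm b * frm a) u) ^ 2 ≤
      ∑ b, ∑ a, (2 * ev X (DD (frm b) (DD (frm a) u)) ^ 2 + 2 * ev X (DD (frm a) (DD (frm b) u)) ^ 2) := by
    refine Finset.sum_le_sum fun b _ => Finset.sum_le_sum fun a _ => ?_
    rw [← DD_comm (frm b) (frm a), ev_sub]
    nlinarith [sq_nonneg (ev X (DD (frm b) (DD (frm a) u)) + ev X (DD (frm a) (DD (frm b) u)))]
  have h2 : ∑ b, ∑ a : Idx N, (2 * ev X (DD (frm b) (DD (frm a) u)) ^ 2 + 2 * ev X (DD (frm a) (DD (frm b) u)) ^ 2)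
     = 4 * ∑ b, ∑ a, ev X (DD (frm b) (DD (frm a) u)) ^ 2 := by
    simp only [Finset.sum_add_distrib, ← Finset.mul_sum]
    rw [Finset.sum_comm (f := fun b a => ev X (DD (frm a) (DD (frm b) u)) ^ 2)]
    ring
  linarith

/-- Carre du champ of `u`. -/
noncomputable def Gam {N : ℕ} (u : RPoly N) : RPoly N := ∑ a, DD (frm a) u * DD (frm a) u

lemma Lap_sq {N : ℕ} (p q : RPoly N) :
    Lap (p * q) = 2 * (∑ b, DD (frm b) p * DD (frm b) q) + p * Lap q + q * Lap p := by
  simp only [Lap_apply, Derivation.leibniz, smul_eq_mul, map_add, Finset.mul_sum, ← Finset.sum_add_distrib]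
  exact Finset.sum_congr rfl fun _ _ => by ring

lemma Lap_Gam {N : ℕ} (hN : 1 ≤ N) (X : MC N) (u : RPoly N) :
    ev X (Lap (Gam u)) = 2 * ∑ b, ∑ a, ev X (DD (frm b) (DD (frm a) u)) ^ 2
      + 2 * ∑ a, ev X (DD (frm a) u) * ev X (DD (frm a) (Lap u)) := by
  rw [Gam, map_sum, ev_sum, Finset.sum_comm, Finset.mul_sum, Finset.mul_sum, ← Finset.sum_add_distrib]
  refine Finset.sum_congr rfl fun a _ => ?_
  rw [Lap_sq, ← Lap_comm hN (frm_mem hN a), ev_add, ev_add, ev_mul, ev_mul, ev_sum]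
  have : ev X (2 : RPoly N) = 2 := by
    exact map_ofNat (MvPolynomial.eval (coord X)) 2
  simp only [this, ev_mul, sq]
  ring

lemma max_second {φ φ1 : ℝ → ℝ} {φ2 : ℝ} (h1 : ∀ s, HasDerivAt φ (φ1 s) s)
    (h2 : HasDerivAt φ1 φ2 0) (hm : ∀ s, φ s ≤ φ 0) : φ2 ≤ 0 := by
  by_contra! hpos
  have hd : deriv φ = φ1 := funext fun s => (h1 s).deriv
  have hmax : IsLocalMax φ 0 := Filter.Eventually.of_forall hm
  have hd0 : φ1 0 = 0 := hd ▸ hmax.deriv_eq_zero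
  have hmin : IsLocalMin φ 0 := by
    apply isLocalMin_of_deriv_deriv_pos
    · rw [hd, h2.deriv]; exact hpos
    · rw [hd, hd0]
    · exact (h1 0).continuousAt
  have heq : φ =ᶠ[nhds 0] fun _ => φ 0 := by
    filter_upwards [hmin] with s hs
    exact le_antisymm (hm s) hs
  have h3 : φ1 =ᶠ[nhds 0] fun _ => 0 := by
    have := heq.deriv
    rw [hd] at this
    simpa using this
  have : deriv φ1 0 = 0 := by rw [h3.deriv_eq]; simp
  rw [h2.deriv] at this
  linarith

lemma flow_zero_mul {N : ℕ} (A : su N) (X : UG N) : flow A 0 * X = X := by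
  rw [flow_zero, one_mul]

lemma ev_max {N : ℕ} (A : su N) (X : UG N) (p : RPoly N)
    (hm : ∀ s, ev ((flow A s * X : UG N) : MC N) p ≤ ev (X : MC N) p) :
    ev (X : MC N) (DD (A : MC N) (DD (A : MC N) p)) ≤ 0 := by
  have h2 := hasDerivAt_ev A X (DD (A : MC N) p) 0
  rw [flow_zero_mul] at h2
  refine max_second (fun s => hasDerivAt_ev A X p s) h2 fun s => ?_
  rw [flow_zero_mul]
  exact hm s

lemma Lap_max {N : ℕ} (hN : 1 ≤ N) (X : UG N) (p : RPoly N)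
    (hm : ∀ Y : UG N, ev (Y : MC N) p ≤ ev (X : MC N) p) : ev (X : MC N) (Lap p) ≤ 0 := by
  rw [Lap_apply, ev_sum]
  exact Finset.sum_nonpos fun v _ => ev_max ⟨frm v, frm_mem hN v⟩ X p fun s => hm _

lemma frob_nonneg {N : ℕ} (A : MC N) : 0 ≤ frob A := Real.sqrt_nonneg _

lemma frob_eq {N : ℕ} (A : MC N) : frob A = Real.sqrt (ip A A) := by
  rw [ip_self, Real.sqrt_sq (frob_nonneg A)]

lemma frob_mul_right {N : ℕ} (A : MC N) (X : UG N) : frob (A * (X : MC N)) = frob A := by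
  rw [frob_eq, frob_eq, ip_eq_trace, ip_eq_trace, Matrix.conjTranspose_mul, Matrix.trace_mul_comm,
    Matrix.mul_assoc, ← Matrix.mul_assoc (X : MC N)]
  have : (X : MC N) * (X : MC N).conjTranspose = 1 := X.2.2
  rw [this, Matrix.one_mul, Matrix.trace_mul_comm]

lemma frob_mul_left {N : ℕ} (A : MC N) (X : UG N) : frob ((X : MC N) * A) = frob A := by
  rw [frob_eq, frob_eq, ip_eq_trace, ip_eq_trace, Matrix.conjTranspose_mul,
    Matrix.mul_assoc, ← Matrix.mul_assoc _ (X : MC N)]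
  have : (X : MC N).conjTranspose * (X : MC N) = 1 := X.2.1
  rw [this, Matrix.one_mul]

lemma frob_smul {N : ℕ} (c : ℝ) (A : MC N) : frob (c • A) = |c| * frob A := by
  rw [frob_eq, frob_eq]
  have : ip (c • A) (c • A) = c ^ 2 * ip A A := by
    simp only [ip, coord_smul, Finset.mul_sum]
    exact Finset.sum_congr rfl fun _ _ => by ring
  rw [this, Real.sqrt_mul (sq_nonneg c), Real.sqrt_sq_eq_abs]

lemma coord_sub {N : ℕ} (A B : MC N) (v : Idx N) : coord (A - B) v = coord A v - coord B v := by
  obtain ⟨i, j, _ | _⟩ := v <;> simp [coord]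

lemma grad_bound_dir {N : ℕ} (f : RPoly N) (L : ℝ)
    (hf : ∀ X Y : UG N, |ev (X : MC N) f - ev (Y : MC N) f| ≤ L * frob ((X : MC N) - (Y : MC N)))
    (A : su N) (X : UG N) : |ev (X : MC N) (DD (A : MC N) f)| ≤ L * frob (A : MC N) := by
  have h1 := (hasDerivAt_ev A X f 0).tendsto_slope_zero.abs
  have h2 : Filter.Tendsto (fun t : ℝ => L * frob (t⁻¹ • (((flow A t * X : UG N) : MC N) - (X : MC N))))
      (nhdsWithin 0 {0}ᶜ) (nhds (L * frob (A : MC N))) := by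
    refine Filter.Tendsto.const_mul _ ?_
    rw [← frob_mul_right (A : MC N) X]
    simp only [frob_eq, ip]
    refine (Real.continuous_sqrt.tendsto _).comp ?_
    refine tendsto_finset_sum _ fun v _ => ?_
    have h3 := (hasDerivAt_coord A X v 0).tendsto_slope_zero
    simp only [zero_add, flow_zero_mul] at h3
    have h4 : ∀ t : ℝ, coord (t⁻¹ • (((flow A t * X : UG N) : MC N) - (X : MC N))) v =
      t⁻¹ • (coord ((flow A t * X : UG N) : MC N) v - coord (X : MC N) v) := by
      intro t; rw [coord_smul, coord_sub, smul_eq_mul]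
    simp only [h4]
    exact h3.mul h3
  simp only [zero_add, flow_zero_mul] at h1
  refine le_of_tendsto_of_tendsto' h1 h2 fun t => ?_
  rw [smul_eq_mul, abs_mul, frob_smul, mul_left_comm]
  exact mul_le_mul_of_nonneg_left (hf _ _) (abs_nonneg _)

lemma grad_bound {N : ℕ} (hN : 1 ≤ N) (f : RPoly N) (L : ℝ) (hL : 0 ≤ L)
    (hf : ∀ X Y : UG N, |ev (X : MC N) f - ev (Y : MC N) f| ≤ L * frob ((X : MC N) - (Y : MC N)))
    (X : UG N) : ∑ b, ev (X : MC N) (DD (frm b) f) ^ 2 ≤ L ^ 2 := by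
  have e : ∑ b, ev (X : MC N) (DD (frm b) f) ^ 2 = ip (grad (X : MC N) f) (grad (X : MC N) f) := by
    rw [ip_grad hN]; simp only [sq]
  have h1 := grad_bound_dir f L hf ⟨grad (X : MC N) f, grad_mem hN _ _⟩ X
  rw [ev_DD _ _ (grad_mem hN _ _)] at h1
  rw [e]
  have h2 := (le_abs_self _).trans h1
  rw [ip_self] at h2 ⊢
  have := frob_nonneg (grad (X : MC N) f)
  simp only at h2
  by_contra! hc
  have h3 : L < frob (grad (X : MC N) f) := lt_of_pow_lt_pow_left₀ 2 this hc
  nlinarith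

lemma cs_bound {ι : Type*} [Fintype ι] (y z : ι → ℝ) {a b : ℝ} (ha : 0 ≤ a) (hb : 0 ≤ b)
    (hy : ∑ i, y i ^ 2 ≤ a ^ 2) (hz : ∑ i, z i ^ 2 ≤ b ^ 2) : |∑ i, y i * z i| ≤ a * b := by
  have h := Finset.sum_mul_sq_le_sq_mul_sq Finset.univ y z
  apply abs_le_of_sq_le_sq _ (by positivity)
  rw [mul_pow]
  refine h.trans (mul_le_mul hy hz (Finset.sum_nonneg fun _ _ => sq_nonneg _) (by positivity))

lemma gradu_bound {N : ℕ} (hN : 1 ≤ N) (f u : RPoly N) (L : ℝ) (hL : 0 ≤ L)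
    (hf : ∀ X Y : UG N, |ev (X : MC N) f - ev (Y : MC N) f| ≤ L * frob ((X : MC N) - (Y : MC N)))
    (hu : ∀ (X : UG N) (a : Idx N), ev (X : MC N) (DD (frm a) (Lap u)) = -ev (X : MC N) (DD (frm a) f))
    (X : UG N) : ∑ b, ev (X : MC N) (DD (frm b) u) ^ 2 ≤ (2 * L / N) ^ 2 := by
  have hN0 : (0 : ℝ) < N := by exact_mod_cast (by omega : 0 < N)
  obtain ⟨X0, -, hX0⟩ := isCompact_univ.exists_isMaxOn (Set.univ_nonempty (α := UG N))
    (continuous_evU (Gam u)).continuousOn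
  have hmax : ∀ Y : UG N, ev (Y : MC N) (Gam u) ≤ ev (X0 : MC N) (Gam u) := fun Y => hX0 (Set.mem_univ Y)
  have hG : ∀ Y : UG N, ev (Y : MC N) (Gam u) = ∑ b, ev (Y : MC N) (DD (frm b) u) ^ 2 := by
    intro Y
    simp only [Gam, ev_sum, ev_mul, sq]
  rw [← hG]
  refine (hmax X).trans ?_
  have h1 := Lap_max hN X0 _ hmax
  rw [Lap_Gam hN] at h1
  have h2 := bochner hN (X0 : MC N) u
  rw [← hG] at h2
  set Y2 := ev (X0 : MC N) (Gam u) with hY2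
  have hY2n : 0 ≤ Y2 := by rw [hY2, hG]; exact Finset.sum_nonneg fun _ _ => sq_nonneg _
  have h3 := cs_bound (fun b => ev (X0 : MC N) (DD (frm b) u)) (fun b => ev (X0 : MC N) (DD (frm b) f))
    (Real.sqrt_nonneg Y2) hL (by rw [Real.sq_sqrt hY2n, hY2, hG]) (grad_bound hN f L hL hf X0)
  simp only [hu, mul_neg, Finset.sum_neg_distrib] at h1
  have h4 := (le_abs_self _).trans h3
  have h5 : (N : ℝ) * Y2 ≤ 2 * (Real.sqrt Y2 * L) := by linarith
  have h6 := Real.sq_sqrt hY2n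
  have h7 := Real.sqrt_nonneg Y2
  rw [← h6]
  refine pow_le_pow_left₀ h7 ?_ 2
  rw [le_div_iff₀ hN0]
  by_contra! hc
  have : 0 < Real.sqrt Y2 := by
    rcases h7.lt_or_eq with h | h
    · exact h
    · rw [← h] at hc; linarith
  nlinarith

lemma integrable_cont {N : ℕ} (μ : Measure (UG N)) [IsProbabilityMeasure μ] {ψ : UG N → ℝ}
    (h : Continuous ψ) : Integrable ψ μ :=
  h.integrable_of_hasCompactSupport (HasCompactSupport.of_compactSpace ψ)

lemma deriv_integral {N : ℕ} (μ : Measure (UG N)) [IsProbabilityMeasure μ] {ψ dψ : ℝ → UG N → ℝ}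
    (h : ∀ s, Continuous (ψ s)) (h' : Continuous (Function.uncurry dψ))
    (hd : ∀ s X, HasDerivAt (fun s => ψ s X) (dψ s X) s) (s : ℝ) :
    HasDerivAt (fun s => ∫ X, ψ s X ∂μ) (∫ X, dψ s X ∂μ) s := by
  obtain ⟨C, hC⟩ := ((isCompact_closedBall s 1).prod (isCompact_univ (X := UG N))).exists_bound_of_continuousOn
    h'.continuousOn
  refine (hasDerivAt_integral_of_dominated_loc_of_deriv_le (bound := fun _ => C)
    (Metric.closedBall_mem_nhds s one_pos) (Filter.Eventually.of_forall fun x =>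
      (integrable_cont μ (h x)).aestronglyMeasurable) (integrable_cont μ (h s)) ?_ ?_
      (integrable_const C) ?_).2
  · exact (integrable_cont μ (h'.comp (Continuous.prodMk_right s))).aestronglyMeasurable
  · exact Filter.Eventually.of_forall fun a x hx => hC (x, a) ⟨hx, Set.mem_univ _⟩
  · exact Filter.Eventually.of_forall fun a x hx => hd x a

lemma continuous_flow {N : ℕ} (A : su N) : Continuous (flow A) := by
  refine continuous_induced_rng.2 ?_
  refine continuous_pi fun i => continuous_pi fun j => ?_
  refine continuous_iff_continuousAt.2 fun s => ?_
  have := (hasDerivAt_flow A 1 i j s).continuousAt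
  simp only [mul_one] at this
  exact this

lemma ibp {N : ℕ} (μ : Measure (UG N)) [IsProbabilityMeasure μ] [μ.IsMulLeftInvariant] (A : su N)
    {ψ dψ : UG N → ℝ} (h : Continuous ψ) (h' : Continuous dψ)
    (hd : ∀ s X, HasDerivAt (fun s => ψ (flow A s * X)) (dψ (flow A s * X)) s) :
    ∫ X, dψ X ∂μ = 0 := by
  have h1 := deriv_integral μ (ψ := fun s X => ψ (flow A s * X)) (dψ := fun s X => dψ (flow A s * X))
    (fun s => h.comp (continuous_const_mul _))
    (h'.comp (((continuous_flow A).comp continuous_fst).mul continuous_snd)) hd 0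
  simp only [integral_mul_left_eq_self] at h1
  exact h1.unique (hasDerivAt_const _ _)

lemma continuous_exp_ev {N : ℕ} (F : RPoly N) : Continuous (fun X : UG N => Real.exp (ev (X : MC N) F)) :=
  Real.continuous_exp.comp (continuous_evU F)

lemma ibp_exp {N : ℕ} (μ : Measure (UG N)) [IsProbabilityMeasure μ] [μ.IsMulLeftInvariant] (A : su N)
    (q F : RPoly N) : ∫ X : UG N, (ev (X : MC N) (DD (A : MC N) q) +
      ev (X : MC N) q * ev (X : MC N) (DD (A : MC N) F)) * Real.exp (ev (X : MC N) F) ∂μ = 0 := by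
  refine ibp μ A (ψ := fun X : UG N => ev (X : MC N) q * Real.exp (ev (X : MC N) F))
    ((continuous_evU q).mul (continuous_exp_ev F))
    (((continuous_evU _).add ((continuous_evU _).mul (continuous_evU _))).mul (continuous_exp_ev F)) ?_
  intro s X
  refine ((hasDerivAt_ev A X q s).mul (hasDerivAt_ev A X F s).exp).congr_deriv ?_
  ring

lemma E_DD {N : ℕ} (μ : Measure (UG N)) [IsProbabilityMeasure μ] [μ.IsMulLeftInvariant] (A : su N)
    (q : RPoly N) : ∫ X : UG N, ev (X : MC N) (DD (A : MC N) q) ∂μ = 0 := by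
  have := ibp_exp μ A q 0
  simpa only [map_zero, ev_zero, mul_zero, add_zero, Real.exp_zero, mul_one] using this

lemma E_Lap_exp {N : ℕ} (hN : 1 ≤ N) (μ : Measure (UG N)) [IsProbabilityMeasure μ] [μ.IsMulLeftInvariant]
    (u F : RPoly N) : ∫ X : UG N, ev (X : MC N) (Lap u) * Real.exp (ev (X : MC N) F) ∂μ =
      -∫ X : UG N, (∑ a, ev (X : MC N) (DD (frm a) u) * ev (X : MC N) (DD (frm a) F)) *
        Real.exp (ev (X : MC N) F) ∂μ := by
  rw [eq_neg_iff_add_eq_zero, ← integral_add]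
  · have : ∀ X : UG N, ev (X : MC N) (Lap u) * Real.exp (ev (X : MC N) F) +
      (∑ a, ev (X : MC N) (DD (frm a) u) * ev (X : MC N) (DD (frm a) F)) * Real.exp (ev (X : MC N) F) =
      ∑ a, (ev (X : MC N) (DD (frm a) (DD (frm a) u)) +
      ev (X : MC N) (DD (frm a) u) * ev (X : MC N) (DD (frm a) F)) * Real.exp (ev (X : MC N) F) := by
      intro X
      rw [← add_mul, Lap_apply, ev_sum, ← Finset.sum_add_distrib, Finset.sum_mul]
    simp only [this]
    rw [integral_finset_sum]
    · exact Finset.sum_eq_zero fun a _ => ibp_exp μ ⟨frm a, frm_mem hN a⟩ (DD (frm a) u) F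
    · intro a _
      exact integrable_cont μ (((continuous_evU _).add ((continuous_evU _).mul (continuous_evU _))).mul
        (continuous_exp_ev F))
  · exact integrable_cont μ ((continuous_evU _).mul (continuous_exp_ev F))
  · exact integrable_cont μ ((continuous_finset_sum _ fun a _ =>
      (continuous_evU _).mul (continuous_evU _)).mul (continuous_exp_ev F))

lemma E_Lap {N : ℕ} (hN : 1 ≤ N) (μ : Measure (UG N)) [IsProbabilityMeasure μ] [μ.IsMulLeftInvariant]
    (p q : RPoly N) : ∫ X : UG N, ev (X : MC N) p * ev (X : MC N) (Lap q) ∂μ =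
      -∫ X : UG N, (∑ a, ev (X : MC N) (DD (frm a) p) * ev (X : MC N) (DD (frm a) q)) ∂μ := by
  rw [eq_neg_iff_add_eq_zero, ← integral_add]
  · have : ∀ X : UG N, ev (X : MC N) p * ev (X : MC N) (Lap q) +
      (∑ a, ev (X : MC N) (DD (frm a) p) * ev (X : MC N) (DD (frm a) q)) =
      ∑ a, ev (X : MC N) (DD (frm a) (p * DD (frm a) q)) := by
      intro X
      rw [Lap_apply, ev_sum, Finset.mul_sum, ← Finset.sum_add_distrib]
      refine Finset.sum_congr rfl fun a _ => ?_
      rw [Derivation.leibniz, ev_add, smul_eq_mul, smul_eq_mul, ev_mul, ev_mul]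
      ring
    simp only [this]
    rw [integral_finset_sum]
    · exact Finset.sum_eq_zero fun a _ => E_DD μ ⟨frm a, frm_mem hN a⟩ _
    · intro a _
      exact integrable_cont μ (continuous_evU _)
  · exact integrable_cont μ ((continuous_evU _).mul (continuous_evU _))
  · exact integrable_cont μ (continuous_finset_sum _ fun a _ => (continuous_evU _).mul (continuous_evU _))

lemma E_Lap_symm {N : ℕ} (hN : 1 ≤ N) (μ : Measure (UG N)) [IsProbabilityMeasure μ] [μ.IsMulLeftInvariant]
    (p q : RPoly N) : ∫ X : UG N, ev (X : MC N) p * ev (X : MC N) (Lap q) ∂μ =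
      ∫ X : UG N, ev (X : MC N) (Lap p) * ev (X : MC N) q ∂μ := by
  have h : ∀ X : UG N, ev (X : MC N) (Lap p) * ev (X : MC N) q = ev (X : MC N) q * ev (X : MC N) (Lap p) :=
    fun X => mul_comm _ _
  simp only [h]
  rw [E_Lap hN, E_Lap hN]
  congr 1
  refine integral_congr_ae (Filter.Eventually.of_forall fun X => ?_)
  exact Finset.sum_congr rfl fun a _ => mul_comm _ _

lemma zero_of_int {N : ℕ} (μ : Measure (UG N)) [IsProbabilityMeasure μ] [μ.IsMulLeftInvariant]
    {ψ : UG N → ℝ} (h : Continuous ψ) (h0 : ∀ X, 0 ≤ ψ X) (hi : ∫ X, ψ X ∂μ = 0) (X : UG N) : ψ X = 0 := by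
  haveI : μ.IsOpenPosMeasure := isOpenPosMeasure_of_mulLeftInvariant_of_compact Set.univ isCompact_univ
    (by simp)
  have h1 := (integral_eq_zero_iff_of_nonneg h0 (integrable_cont μ h)).1 hi
  have h2 := (Continuous.ae_eq_iff_eq μ h continuous_const).1 h1
  exact congrFun h2 X

lemma descent {N : ℕ} (hN : 1 ≤ N) (μ : Measure (UG N)) [IsProbabilityMeasure μ] [μ.IsMulLeftInvariant]
    (h : RPoly N) (n : ℕ) (hn : ∀ X : UG N, ev (X : MC N) ((Lap ^ (n + 1)) h) = 0) (X : UG N) :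
    ev (X : MC N) (Lap h) = 0 := by
  induction n with
  | zero => simpa using hn X
  | succ n ih =>
    apply ih
    have h1 := E_Lap_symm hN μ ((Lap ^ n) h) ((Lap ^ (n + 1)) h)
    have e1 : ∀ m, Lap ((Lap ^ m) h) = (Lap ^ (m + 1)) h := fun m => by rw [pow_succ']; rfl
    rw [e1, e1] at h1
    simp only [hn, mul_zero, integral_zero] at h1
    intro Y
    have := zero_of_int μ ((continuous_evU ((Lap ^ (n + 1)) h)).mul (continuous_evU ((Lap ^ (n + 1)) h)))
      (fun X => mul_self_nonneg _) h1.symm Y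
    exact mul_self_eq_zero.1 this

lemma harmonic_grad {N : ℕ} (hN : 1 ≤ N) (μ : Measure (UG N)) [IsProbabilityMeasure μ] [μ.IsMulLeftInvariant]
    (h : RPoly N) (hh : ∀ X : UG N, ev (X : MC N) (Lap h) = 0) (X : UG N) (a : Idx N) :
    ev (X : MC N) (DD (frm a) h) = 0 := by
  have h1 := E_Lap hN μ h h
  simp only [hh, mul_zero, integral_zero] at h1
  have := zero_of_int μ (continuous_finset_sum Finset.univ fun a _ =>
    (continuous_evU (DD (frm a) h)).mul (continuous_evU (DD (frm a) h)))
    (fun X => Finset.sum_nonneg fun a _ => mul_self_nonneg _) (neg_eq_zero.1 h1.symm) X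
  simp only [Pi.mul_apply] at this
  rw [Finset.sum_eq_zero_iff_of_nonneg (fun a _ => mul_self_nonneg _)] at this
  exact mul_self_eq_zero.1 (this a (Finset.mem_univ a))

lemma poisson {N : ℕ} (hN : 1 ≤ N) (μ : Measure (UG N)) [IsProbabilityMeasure μ] [μ.IsMulLeftInvariant]
    (p : RPoly N) : ∃ u h : RPoly N, p = h - Lap u ∧
      ∀ (X : UG N) (a : Idx N), ev (X : MC N) (DD (frm a) h) = 0 := by
  set V := MvPolynomial.restrictTotalDegree (Idx N) ℝ p.totalDegree with hV
  have hLap : ∀ q ∈ V, Lap q ∈ V := by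
    intro q hq
    rw [Lap_apply]
    exact Submodule.sum_mem _ fun a _ => DD_degree _ _ _ (DD_degree _ _ _ hq)
  set T : Module.End ℝ V := Lap.restrict hLap with hT
  have hTn : ∀ (n : ℕ) (q : V), ((T ^ n) q : RPoly N) = (Lap ^ n) (q : RPoly N) := by
    intro n
    induction n with
    | zero => intro q; simp
    | succ n ih =>
      intro q
      rw [pow_succ, pow_succ, Module.End.mul_apply, Module.End.mul_apply, ih]
      rfl
  haveI : Module.Finite ℝ V := inferInstance
  obtain ⟨n, hn, hn1⟩ := (T.eventually_isCompl_ker_pow_range_pow.and (Filter.eventually_ge_atTop 1)).exists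
  obtain ⟨n, rfl⟩ : ∃ k, n = k + 1 := ⟨n - 1, by omega⟩
  have hp : p ∈ V := (MvPolynomial.mem_restrictTotalDegree _ _ _).2 le_rfl
  have hmem : (⟨p, hp⟩ : V) ∈ LinearMap.ker (T ^ (n + 1)) ⊔ LinearMap.range (T ^ (n + 1)) := by
    rw [hn.sup_eq_top]; trivial
  obtain ⟨h, hk, r, ⟨w, rfl⟩, hsum⟩ := Submodule.mem_sup.1 hmem
  refine ⟨-((Lap ^ n) (w : RPoly N)), h, ?_, ?_⟩
  · have := congrArg (Subtype.val) hsum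
    rw [Submodule.coe_add, hTn, pow_succ', Module.End.mul_apply] at this
    rw [map_neg, sub_neg_eq_add]
    exact this.symm
  · apply harmonic_grad hN μ
    apply descent hN μ _ n
    intro X
    rw [← hTn, LinearMap.mem_ker.1 hk]
    exact ev_zero _

lemma const_flow {N : ℕ} (h : RPoly N)
    (hh : ∀ (X : UG N) (a : Idx N), ev (X : MC N) (DD (frm a) h) = 0) (A : su N) (s : ℝ) (X : UG N) :
    ev ((flow A s * X : UG N) : MC N) h = ev (X : MC N) h := by
  have hd : ∀ s, HasDerivAt (fun s => ev ((flow A s * X : UG N) : MC N) h) 0 s := by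
    intro s
    refine (hasDerivAt_ev A X h s).congr_deriv ?_
    rw [DD_expand A.2, ev_sum]
    exact Finset.sum_eq_zero fun a _ => by rw [ev_smul, hh, mul_zero]
  have := is_const_of_deriv_eq_zero (fun s => (hd s).differentiableAt) (fun s => (hd s).deriv) s 0
  simpa only [flow_zero_mul] using this

lemma const_su {N : ℕ} (hN : 1 ≤ N) (h : RPoly N)
    (hh : ∀ (X : UG N) (a : Idx N), ev (X : MC N) (DD (frm a) h) = 0) (X Y : UG N)
    (hd : (X : MC N).det = (Y : MC N).det) : ev (X : MC N) h = ev (Y : MC N) h := by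
  have hdet : ((X * Y⁻¹ : UG N) : MC N).det = 1 := by
    have h1 : ((X * Y⁻¹ : UG N) : MC N) * (Y : MC N) = X := by
      rw [← Submonoid.coe_mul, inv_mul_cancel_right]
    have h2 := congrArg Matrix.det h1
    rw [Matrix.det_mul, hd] at h2
    have h3 : (Y : MC N).det ≠ 0 := by
      intro h0
      have h4 := congrArg Matrix.det Y.2.2
      rw [Matrix.det_mul, h0] at h4
      simp at h4
    exact mul_right_cancel₀ h3 (by rw [h2, one_mul])
  obtain ⟨A, B, hAB⟩ := su_generate hN _ hdet
  have : X = flow A 1 * (flow B 1 * Y) := by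
    rw [← mul_assoc, ← hAB, inv_mul_cancel_right]
  rw [this, const_flow h hh, const_flow h hh]

/-- Scalar unitary. -/
noncomputable def sc (N : ℕ) (φ : ℝ) : UG N :=
  ⟨Complex.exp (Complex.I * φ) • (1 : MC N), by
    rw [Matrix.mem_unitaryGroup_iff', star_smul, star_one, Matrix.smul_mul, Matrix.mul_smul, one_mul, smul_smul,
      Complex.star_def, ← Complex.exp_conj, ← Complex.exp_add]
    simp⟩

lemma sc_coe (N : ℕ) (φ : ℝ) : (sc N φ : MC N) = Complex.exp (Complex.I * φ) • (1 : MC N) := rfl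

lemma sc_comm {N : ℕ} (φ : ℝ) (X : UG N) : sc N φ * X = X * sc N φ := by
  apply Subtype.ext
  simp [sc_coe]

lemma sc_det {N : ℕ} (φ : ℝ) : (sc N φ : MC N).det = Complex.exp (N * (Complex.I * φ)) := by
  rw [sc_coe, Matrix.det_smul, Matrix.det_one, mul_one, Fintype.card_fin, Complex.exp_nat_mul]

lemma frob_sc {N : ℕ} (φ : ℝ) (X : UG N) :
    frob (((sc N φ * X : UG N) : MC N) - (X : MC N)) ≤ Real.sqrt N * |φ| := by
  have h1 : ((sc N φ * X : UG N) : MC N) - (X : MC N) =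
    ((Complex.exp (Complex.I * φ) - 1) • (1 : MC N)) * (X : MC N) := by
    rw [Submonoid.coe_mul, sc_coe, sub_smul, Matrix.sub_mul, one_smul, Matrix.one_mul]
  rw [h1, frob_mul_right, frob]
  have h2 : ∀ i : Fin N, ∑ j, ‖((Complex.exp (Complex.I * φ) - 1) • (1 : MC N)) i j‖ ^ 2 =
      ‖Complex.exp (Complex.I * φ) - 1‖ ^ 2 := by
    intro i
    rw [Finset.sum_eq_single i]
    · simp
    · intro j _ hj
      simp [Matrix.one_apply, hj.symm]
    · simp
  simp only [h2, Finset.sum_const, Finset.card_univ, Fintype.card_fin, nsmul_eq_mul]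
  rw [Real.sqrt_mul (by positivity), Real.sqrt_sq (norm_nonneg _)]
  exact mul_le_mul_of_nonneg_left Real.norm_exp_I_mul_ofReal_sub_one_le (Real.sqrt_nonneg _)

lemma det_norm {N : ℕ} (X : UG N) : ‖(X : MC N).det‖ = 1 :=
  CStarRing.norm_of_mem_unitary (Matrix.det_of_mem_unitary X.2)

lemma osc_bound {N : ℕ} (hN : 1 ≤ N) (f u h : RPoly N) (L : ℝ) (hL : 0 ≤ L)
    (hf : ∀ X Y : UG N, |ev (X : MC N) f - ev (Y : MC N) f| ≤ L * frob ((X : MC N) - (Y : MC N)))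
    (hfu : f = h - Lap u)
    (hh : ∀ (X : UG N) (a : Idx N), ev (X : MC N) (DD (frm a) h) = 0) (X Y : UG N) :
    ev (Y : MC N) h - ev (X : MC N) h ≤ L * (Real.sqrt N * (Real.pi / N)) := by
  have hN0 : (0 : ℝ) < N := by exact_mod_cast (by omega : 0 < N)
  set z : ℂ := (Y : MC N).det * star (X : MC N).det with hz
  set φ : ℝ := Complex.arg z / N with hφ
  have hzn : ‖z‖ = 1 := by rw [hz, norm_mul, norm_star, det_norm, det_norm, one_mul]
  have hφb : |φ| ≤ Real.pi / N := by
    rw [hφ, abs_div, Nat.abs_cast]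
    gcongr
    exact Complex.abs_arg_le_pi z
  have hscd : (sc N φ : MC N).det = z := by
    rw [sc_det, hφ]
    have h1 := Complex.norm_mul_exp_arg_mul_I z
    rw [hzn, Complex.ofReal_one, one_mul] at h1
    rw [← h1]
    congr 1
    have : (N : ℂ) ≠ 0 := by exact_mod_cast hN0.ne'
    rw [h1]
    push_cast
    field_simp
  have hXX : star (X : MC N).det * (X : MC N).det = 1 := by
    rw [Complex.star_def, ← Complex.normSq_eq_conj_mul_self, Complex.normSq_eq_norm_sq, det_norm]; simp
  have hY : ev (Y : MC N) h = ev ((sc N φ * X : UG N) : MC N) h := by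
    apply const_su hN h hh
    rw [Submonoid.coe_mul, Matrix.det_mul, hscd, hz, mul_assoc, hXX, mul_one]
  set K : Set (UG N) := {W | (W : MC N).det = (X : MC N).det} with hK
  have hKc : IsCompact K := by
    apply IsClosed.isCompact
    exact isClosed_eq (Continuous.matrix_det continuous_subtype_val) continuous_const
  have hcont : Continuous (fun W : UG N => ev ((sc N φ * W : UG N) : MC N) u - ev (W : MC N) u) :=
    ((continuous_evU u).comp (continuous_const_mul (sc N φ))).sub (continuous_evU u)
  obtain ⟨W, hWK, hW⟩ := hKc.exists_isMaxOn ⟨X, rfl⟩ hcont.continuousOn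
  have hWd : (W : MC N).det = (X : MC N).det := hWK
  have e1 : ev (X : MC N) h = ev (W : MC N) h := const_su hN h hh _ _ hWd.symm
  have e2 : ev ((sc N φ * X : UG N) : MC N) h = ev ((sc N φ * W : UG N) : MC N) h := by
    apply const_su hN h hh
    rw [Submonoid.coe_mul, Matrix.det_mul, Submonoid.coe_mul, Matrix.det_mul, hWd]
  have hlap : ev ((sc N φ * W : UG N) : MC N) (Lap u) - ev (W : MC N) (Lap u) ≤ 0 := by
    rw [Lap_apply, ev_sum, ev_sum, ← Finset.sum_sub_distrib]
    refine Finset.sum_nonpos fun a _ => ?_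
    set A : su N := ⟨frm a, frm_mem hN a⟩ with hA
    have d1 : ∀ s, HasDerivAt (fun s => ev ((flow A s * (sc N φ * W) : UG N) : MC N) u -
      ev ((flow A s * W : UG N) : MC N) u) _ s := fun s =>
      (hasDerivAt_ev A (sc N φ * W) u s).sub (hasDerivAt_ev A W u s)
    have d2 := (hasDerivAt_ev A (sc N φ * W) (DD (A : MC N) u) 0).sub
      (hasDerivAt_ev A W (DD (A : MC N) u) 0)
    rw [flow_zero_mul, flow_zero_mul] at d2
    refine max_second d1 d2 fun s => ?_
    rw [flow_zero_mul, flow_zero_mul]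
    have hm : flow A s * W ∈ K := by
      change ((flow A s * W : UG N) : MC N).det = _
      rw [Submonoid.coe_mul, Matrix.det_mul, flow_det, one_mul, hWd]
    have := hW hm
    simp only [Set.mem_setOf_eq] at this
    rw [← mul_assoc, ← sc_comm, mul_assoc]
    exact this
  have hfe : ∀ Z : MC N, ev Z f = ev Z h - ev Z (Lap u) := fun Z => by rw [hfu, ev_sub]
  have h5 := (le_abs_self _).trans (hf (sc N φ * W) W)
  rw [hfe, hfe] at h5
  have h6 : L * frob (((sc N φ * W : UG N) : MC N) - (W : MC N)) ≤ L * (Real.sqrt N * (Real.pi / N)) := by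
    refine mul_le_mul_of_nonneg_left ((frob_sc φ W).trans ?_) hL
    exact mul_le_mul_of_nonneg_left hφb (Real.sqrt_nonneg _)
  rw [hY, e1, e2]
  linarith

lemma E_Lap_zero {N : ℕ} (hN : 1 ≤ N) (μ : Measure (UG N)) [IsProbabilityMeasure μ] [μ.IsMulLeftInvariant]
    (u : RPoly N) : ∫ X : UG N, ev (X : MC N) (Lap u) ∂μ = 0 := by
  have := E_Lap_exp hN μ u 0
  simpa only [map_zero, ev_zero, mul_zero, Finset.sum_const_zero, Real.exp_zero, mul_one, integral_zero, neg_zero,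
    zero_mul] using this

lemma ode_bound {N : ℕ} (hN : 1 ≤ N) (μ : Measure (UG N)) [IsProbabilityMeasure μ] [μ.IsMulLeftInvariant]
    (f u h : RPoly N) (L : ℝ) (hL : 0 ≤ L)
    (hf : ∀ X Y : UG N, |ev (X : MC N) f - ev (Y : MC N) f| ≤ L * frob ((X : MC N) - (Y : MC N)))
    (hfu : f = h - Lap u)
    (hh : ∀ (X : UG N) (a : Idx N), ev (X : MC N) (DD (frm a) h) = 0) :
    ∫ X : UG N, Real.exp (ev (X : MC N) f) ∂μ ≤
      Real.exp (L ^ 2 / N) * ∫ X : UG N, Real.exp (ev (X : MC N) h) ∂μ := by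
  have hN0 : (0 : ℝ) < N := by exact_mod_cast (by omega : 0 < N)
  have hD : ∀ (X : UG N) (a : Idx N), ev (X : MC N) (DD (frm a) (Lap u)) = -ev (X : MC N) (DD (frm a) f) := by
    intro X a
    rw [hfu, map_sub, ev_sub, hh]; ring
  set F : ℝ → RPoly N := fun s => s • (-Lap u) + h with hF
  have hFe : ∀ s (X : UG N), ev (X : MC N) (F s) = s * (-ev (X : MC N) (Lap u)) + ev (X : MC N) h := by
    intro s X; simp only [hF, ev_add, ev_smul, ev_neg]
  set Φ : ℝ → ℝ := fun s => ∫ X : UG N, Real.exp (ev (X : MC N) (F s)) ∂μ with hΦ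
  have hΦd : ∀ s, HasDerivAt Φ (∫ X : UG N, -ev (X : MC N) (Lap u) * Real.exp (ev (X : MC N) (F s)) ∂μ) s := by
    intro s
    refine deriv_integral μ (ψ := fun s (X : UG N) => Real.exp (ev (X : MC N) (F s)))
      (dψ := fun s (X : UG N) => -ev (X : MC N) (Lap u) * Real.exp (ev (X : MC N) (F s)))
      (fun s => continuous_exp_ev _) ?_ ?_ s
    · simp only [hFe]
      have c1 := (continuous_evU (Lap u)).comp (continuous_snd (X := ℝ) (Y := UG N))
      have c2 := (continuous_evU h).comp (continuous_snd (X := ℝ) (Y := UG N))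
      exact c1.neg.mul (Real.continuous_exp.comp ((continuous_fst.mul c1.neg).add c2))
    · intro s X
      simp only [hFe]
      refine ((((hasDerivAt_id s).mul_const _).add_const _).exp).congr_deriv ?_
      simp only [id]
      ring
  have hΦ0 : ∀ s, 0 ≤ Φ s := fun s => integral_nonneg fun X => (Real.exp_pos _).le
  have hΦle : ∀ s, 0 ≤ s → ∫ X : UG N, -ev (X : MC N) (Lap u) * Real.exp (ev (X : MC N) (F s)) ∂μ ≤
      s * (2 * L ^ 2 / N) * Φ s := by
    intro s hs
    have h1 := E_Lap_exp hN μ u (F s)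
    simp only [neg_mul, integral_neg]
    rw [h1, neg_neg, hΦ, ← integral_const_mul]
    refine integral_mono (integrable_cont μ ((continuous_finset_sum _ fun a _ =>
      (continuous_evU _).mul (continuous_evU _)).mul (continuous_exp_ev _)))
      (integrable_cont μ (continuous_const.mul (continuous_exp_ev _))) fun X => ?_
    refine mul_le_mul_of_nonneg_right ?_ (Real.exp_pos _).le
    have e : ∀ a : Idx N, ev (X : MC N) (DD (frm a) u) * ev (X : MC N) (DD (frm a) (F s)) =
      s * (ev (X : MC N) (DD (frm a) u) * ev (X : MC N) (DD (frm a) f)) := by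
      intro a
      simp only [hF, map_add, Derivation.map_smul, map_neg, ev_add, ev_smul, ev_neg, hD, hh]
      ring
    simp only [e, ← Finset.mul_sum]
    refine mul_le_mul_of_nonneg_left ?_ hs
    have := cs_bound _ _ (by positivity) hL (gradu_bound hN f u L hL hf hD X) (grad_bound hN f L hL hf X)
    refine ((le_abs_self _).trans this).trans (le_of_eq ?_)
    ring
  have hanti : AntitoneOn (fun s => Φ s * Real.exp (-(s ^ 2 * (L ^ 2 / N)))) (Set.Icc 0 1) := by
    have hd : ∀ s, HasDerivAt (fun s => Φ s * Real.exp (-(s ^ 2 * (L ^ 2 / N)))) _ s := fun s =>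
      (hΦd s).mul (((hasDerivAt_pow 2 s).mul_const (L ^ 2 / N)).neg.exp)
    refine antitoneOn_of_deriv_nonpos (convex_Icc 0 1) (fun s _ => (hd s).continuousAt.continuousWithinAt)
      (fun s _ => (hd s).differentiableAt.differentiableWithinAt) fun s hs => ?_
    rw [interior_Icc] at hs
    rw [(hd s).deriv]
    have h1 := hΦle s hs.1.le
    have h2 := mul_le_mul_of_nonneg_right h1 (Real.exp_pos (-(s ^ 2 * (L ^ 2 / N)))).le
    have h3 : s * (2 * L ^ 2 / N) * Φ s * Real.exp (-(s ^ 2 * (L ^ 2 / N))) =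
      -(Φ s * (Real.exp (-(s ^ 2 * (L ^ 2 / N))) * -(((2 : ℕ) : ℝ) * s ^ (2 - 1) * (L ^ 2 / N)))) := by
      push_cast; ring
    simp only [Pi.neg_apply] at *
    linarith
  have h01 := hanti (Set.left_mem_Icc.2 zero_le_one) (Set.right_mem_Icc.2 zero_le_one) zero_le_one
  have hΦ1 : Φ 1 = ∫ X : UG N, Real.exp (ev (X : MC N) f) ∂μ := by
    simp only [hΦ, hF, hfu, one_smul, neg_add_eq_sub]
  have hΦ00 : Φ 0 = ∫ X : UG N, Real.exp (ev (X : MC N) h) ∂μ := by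
    simp only [hΦ, hF, zero_smul, zero_add]
  simp only at h01
  rw [hΦ1, hΦ00] at h01
  simp only [one_pow, one_mul, ne_eq, OfNat.ofNat_ne_zero, not_false_eq_true, zero_pow, zero_mul, neg_zero,
    Real.exp_zero, mul_one] at h01
  rw [Real.exp_neg, ← div_eq_mul_inv, div_le_iff₀ (Real.exp_pos _)] at h01
  linarith

lemma poly_bound {N : ℕ} (hN : 1 ≤ N) (μ : Measure (UG N)) [IsProbabilityMeasure μ] [μ.IsMulLeftInvariant]
    (f : RPoly N) (L : ℝ) (hL : 0 ≤ L)
    (hf : ∀ X Y : UG N, |ev (X : MC N) f - ev (Y : MC N) f| ≤ L * frob ((X : MC N) - (Y : MC N)))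
    (hm : ∫ X : UG N, ev (X : MC N) f ∂μ = 0) :
    ∫ X : UG N, Real.exp (ev (X : MC N) f) ∂μ ≤ Real.exp (3 * L ^ 2 / N) := by
  have hN0 : (0 : ℝ) < N := by exact_mod_cast (by omega : 0 < N)
  obtain ⟨u, h, hfu, hh⟩ := poisson hN μ f
  refine (ode_bound hN μ f u h L hL hf hfu hh).trans ?_
  have hmh : ∫ X : UG N, ev (X : MC N) h ∂μ = 0 := by
    have e : ∀ X : UG N, ev (X : MC N) h = ev (X : MC N) f + ev (X : MC N) (Lap u) := by
      intro X; rw [hfu, ev_sub]; ring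
    simp only [e]
    rw [integral_add (integrable_cont μ (continuous_evU _)) (integrable_cont μ (continuous_evU _)), hm,
      E_Lap_zero hN, add_zero]
  obtain ⟨X0, -, hX0⟩ := isCompact_univ.exists_isMinOn (Set.univ_nonempty (α := UG N))
    (continuous_evU h).continuousOn
  set a := ev (X0 : MC N) h with ha
  set D := L * (Real.sqrt N * (Real.pi / N)) with hD
  have hD0 : 0 ≤ D := by have := Real.pi_pos; positivity
  have hsub := ProbabilityTheory.hasSubgaussianMGF_of_mem_Icc_of_integral_eq_zero (μ := μ)
    (X := fun X : UG N => ev (X : MC N) h) (a := a) (b := a + D)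
    (continuous_evU h).measurable.aemeasurable (Filter.Eventually.of_forall fun X =>
      ⟨hX0 (Set.mem_univ X), by have := osc_bound hN f u h L hL hf hfu hh X0 X; linarith⟩) hmh
  have h1 := hsub.mgf_le 1
  simp only [ProbabilityTheory.mgf, one_mul] at h1
  have h2 := mul_le_mul_of_nonneg_left h1 (Real.exp_pos (L ^ 2 / N)).le
  refine h2.trans ?_
  rw [← Real.exp_add]
  refine Real.exp_le_exp.2 ?_
  have h3 : (((‖a + D - a‖₊ / 2) ^ 2 : NNReal) : ℝ) = D ^ 2 / 4 := by
    push_cast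
    rw [Real.norm_eq_abs, add_sub_cancel_left, abs_of_nonneg hD0]; ring
  rw [h3]
  have h4 : D ^ 2 = Real.pi ^ 2 * (L ^ 2 / N) := by
    rw [hD, mul_pow, mul_pow, Real.sq_sqrt hN0.le]; field_simp
  rw [h4]
  have h5 : Real.pi ^ 2 ≤ 16 := by nlinarith [Real.pi_pos, Real.pi_le_four]
  have h6 : 0 ≤ L ^ 2 / N := by positivity
  have h7 : 3 * L ^ 2 / N = 3 * (L ^ 2 / N) := by ring
  rw [h7]
  nlinarith

lemma continuous_ip {N : ℕ} {T : Type*} [TopologicalSpace T] {a b : T → MC N} (ha : Continuous a)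
    (hb : Continuous b) : Continuous (fun x => ip (a x) (b x)) := by
  unfold ip
  exact continuous_finset_sum _ fun v _ => ((continuous_coord v).comp ha).mul ((continuous_coord v).comp hb)

lemma continuous_frob {N : ℕ} {T : Type*} [TopologicalSpace T] {a : T → MC N} (ha : Continuous a) :
    Continuous (fun x => frob (a x)) := by
  simp only [frob_eq]
  exact Real.continuous_sqrt.comp (continuous_ip ha ha)

lemma frob_zero {N : ℕ} : frob (0 : MC N) = 0 := by simp [frob]

lemma frob_eq_zero {N : ℕ} {A : MC N} (h : frob A = 0) : A = 0 := by
  rw [frob, Real.sqrt_eq_zero (by positivity)] at h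
  rw [Finset.sum_eq_zero_iff_of_nonneg (fun _ _ => by positivity)] at h
  ext i j
  have h1 := h i (Finset.mem_univ i)
  rw [Finset.sum_eq_zero_iff_of_nonneg (fun _ _ => by positivity)] at h1
  have h2 := h1 j (Finset.mem_univ j)
  simpa using h2

lemma lip_cont {N : ℕ} {g : UG N → ℝ} {L : ℝ}
    (hg : ∀ X Y : UG N, |g X - g Y| ≤ L * frob ((X : MC N) - (Y : MC N))) : Continuous g := by
  refine continuous_iff_continuousAt.2 fun Y => ?_
  rw [ContinuousAt, tendsto_iff_norm_sub_tendsto_zero]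
  refine squeeze_zero (fun _ => norm_nonneg _) (fun X => hg X Y) ?_
  have : Continuous (fun X : UG N => L * frob ((X : MC N) - (Y : MC N))) :=
    continuous_const.mul (continuous_frob (continuous_subtype_val.sub continuous_const))
  have h := this.tendsto Y
  rwa [sub_self, frob_zero, mul_zero] at h

/-- The peak kernel. -/
noncomputable def pk {N : ℕ} (Z : UG N) : ℝ := N + ip (1 : MC N) (Z : MC N)

lemma continuous_pk {N : ℕ} : Continuous (pk (N := N)) :=
  continuous_const.add (continuous_ip continuous_const continuous_subtype_val)

lemma ip_unitary {N : ℕ} (X : UG N) : ip (X : MC N) (X : MC N) = N := by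
  rw [ip_eq_trace]
  have : (X : MC N).conjTranspose * (X : MC N) = 1 := X.2.1
  rw [this]; simp

lemma ip_add_self {N : ℕ} (A B : MC N) : ip (A + B) (A + B) = ip A A + 2 * ip A B + ip B B := by
  simp only [ip, coord_add, Finset.mul_sum, ← Finset.sum_add_distrib]
  exact Finset.sum_congr rfl fun _ _ => by ring

lemma ip_sub_self {N : ℕ} (A B : MC N) : ip (A - B) (A - B) = ip A A - 2 * ip A B + ip B B := by
  simp only [ip, coord_sub, Finset.mul_sum, ← Finset.sum_add_distrib, ← Finset.sum_sub_distrib]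
  exact Finset.sum_congr rfl fun _ _ => by ring

lemma pk_one {N : ℕ} : pk (1 : UG N) = 2 * N := by
  have := ip_unitary (1 : UG N)
  simp only [pk]
  rw [Submonoid.coe_one] at *
  rw [this]; ring

lemma pk_eq {N : ℕ} (Z : UG N) : pk Z = 2 * N - frob ((Z : MC N) - 1) ^ 2 / 2 := by
  have h1 := ip_unitary (1 : UG N)
  rw [Submonoid.coe_one] at h1
  rw [← ip_self, ip_sub_self, ip_unitary, h1, pk, ip_comm]; ring

lemma pk_nonneg {N : ℕ} (Z : UG N) : 0 ≤ pk Z := by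
  have h1 := ip_unitary (1 : UG N)
  rw [Submonoid.coe_one] at h1
  have h2 := ip_add_self (1 : MC N) (Z : MC N)
  rw [ip_self, ip_unitary, h1] at h2
  rw [pk]
  nlinarith [sq_nonneg (frob (1 + (Z : MC N)))]

lemma pk_lt {N : ℕ} (Z : UG N) (hZ : Z ≠ 1) : pk Z < pk (1 : UG N) := by
  rw [pk_one, pk_eq]
  have : frob ((Z : MC N) - 1) ≠ 0 := by
    intro h
    apply hZ
    apply Subtype.ext
    exact sub_eq_zero.1 (frob_eq_zero h)
  have := sq_pos_of_ne_zero this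
  linarith

lemma pk_int_pos {N : ℕ} (hN : 1 ≤ N) (μ : Measure (UG N)) [IsProbabilityMeasure μ] [μ.IsMulLeftInvariant]
    (m : ℕ) : 0 < ∫ Z, pk Z ^ m ∂μ := by
  have h0 : 0 ≤ ∫ Z, pk Z ^ m ∂μ := integral_nonneg fun Z => pow_nonneg (pk_nonneg Z) m
  refine h0.lt_of_ne fun h => ?_
  have := zero_of_int μ (continuous_pk.pow m) (fun Z => pow_nonneg (pk_nonneg Z) m) h.symm 1
  simp only [Pi.pow_apply] at this
  rw [pk_one] at this
  have hN0 : (0 : ℝ) < N := by exact_mod_cast (by omega : 0 < N)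
  have h3 : (0 : ℝ) < (2 * N) ^ m := by positivity
  exact h3.ne' this

lemma pk_tendsto {N : ℕ} (hN : 1 ≤ N) (μ : Measure (UG N)) [IsProbabilityMeasure μ] [μ.IsMulLeftInvariant] :
    Filter.Tendsto (fun m : ℕ => (∫ Z, pk Z ^ m ∂μ)⁻¹ * ∫ Z : UG N, pk Z ^ m * frob ((Z : MC N) - 1) ∂μ)
      Filter.atTop (nhds 0) := by
  haveI : μ.IsOpenPosMeasure := isOpenPosMeasure_of_mulLeftInvariant_of_compact Set.univ isCompact_univ
    (by simp)
  have hN0 : (0 : ℝ) < N := by exact_mod_cast (by omega : 0 < N)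
  have hfc : Continuous (fun Z : UG N => frob ((Z : MC N) - 1)) :=
    continuous_frob (continuous_subtype_val.sub continuous_const)
  have hpos : 0 < pk (1 : UG N) := by rw [pk_one]; positivity
  have hcl : (1 : UG N) ∈ closure (interior (Set.univ : Set (UG N))) := by
    rw [interior_univ, closure_univ]; exact Set.mem_univ _
  have h := tendsto_setIntegral_pow_smul_of_unique_maximum_of_isCompact_of_continuousOn (μ := μ)
    (isCompact_univ (X := UG N)) (continuous_pk (N := N)).continuousOn (fun y _ hy => pk_lt y hy)
    (fun x _ => pk_nonneg x) hpos hcl hfc.continuousOn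
  rw [Measure.restrict_univ] at h
  have e : frob (((1 : UG N) : MC N) - 1) = 0 := by
    rw [Submonoid.coe_one, sub_self, frob_zero]
  rw [e] at h
  exact h

lemma poly_int {N : ℕ} (μ : Measure (UG N)) [IsProbabilityMeasure μ] (m : ℕ) :
    ∀ g : UG N → ℝ, Continuous g → ∃ p : RPoly N, ∀ X : MC N, ev X p =
      ∫ Y : UG N, g Y * (N + ip X (Y : MC N)) ^ m ∂μ := by
  induction m with
  | zero =>
    intro g _
    exact ⟨MvPolynomial.C (∫ Y, g Y ∂μ), fun X => by simp [ev_C]⟩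
  | succ m ih =>
    intro g hg
    obtain ⟨p0, hp0⟩ := ih g hg
    have hc : ∀ v : Idx N, Continuous (fun Y : UG N => g Y * coord (Y : MC N) v) := fun v =>
      hg.mul ((continuous_coord v).comp continuous_subtype_val)
    choose p hp using fun v : Idx N => ih _ (hc v)
    refine ⟨MvPolynomial.C (N : ℝ) * p0 + ∑ v, MvPolynomial.X v * p v, fun X => ?_⟩
    have hcm : Continuous (fun Y : UG N => (N + ip X (Y : MC N)) ^ m) :=
      (continuous_const.add (continuous_ip continuous_const continuous_subtype_val)).pow m
    rw [ev_add, ev_mul, ev_C, ev_sum, hp0]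
    simp only [ev_mul, ev_X, hp]
    simp only [← integral_const_mul]
    rw [← integral_finset_sum, ← integral_add]
    · refine integral_congr_ae (Filter.Eventually.of_forall fun Y => ?_)
      simp only [pow_succ]
      have : ∑ v, coord X v * (g Y * coord (Y : MC N) v * (N + ip X (Y : MC N)) ^ m) =
        g Y * (N + ip X (Y : MC N)) ^ m * ip X (Y : MC N) := by
        conv_rhs => rw [ip, Finset.mul_sum]
        refine Finset.sum_congr rfl fun v _ => ?_
        simp only [ip]
        ring
      rw [this]; ring
    · exact integrable_cont μ (continuous_const.mul (hg.mul hcm))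
    · exact integrable_cont μ (continuous_finset_sum _ fun v _ => continuous_const.mul ((hc v).mul hcm))
    · intro v _
      exact integrable_cont μ (continuous_const.mul ((hc v).mul hcm))

lemma pk_shift {N : ℕ} (X Y : UG N) : pk (X⁻¹ * Y) = N + ip (X : MC N) (Y : MC N) := by
  rw [pk, ip_eq_trace, ip_eq_trace, Matrix.conjTranspose_one, Matrix.one_mul]
  rfl

lemma smooth {N : ℕ} (hN : 1 ≤ N) (μ : Measure (UG N)) [IsProbabilityMeasure μ] [μ.IsMulLeftInvariant]
    (g : UG N → ℝ) (L : ℝ) (hL : 0 ≤ L)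
    (hg : ∀ X Y : UG N, |g X - g Y| ≤ L * frob ((X : MC N) - (Y : MC N))) (ε : ℝ) (hε : 0 < ε) :
    ∃ p : RPoly N, (∀ X Y : UG N, |ev (X : MC N) p - ev (Y : MC N) p| ≤ L * frob ((X : MC N) - (Y : MC N))) ∧
      ∀ X : UG N, |ev (X : MC N) p - g X| ≤ ε := by
  have hgc := lip_cont hg
  have ht := (pk_tendsto hN μ).const_mul L
  rw [mul_zero] at ht
  obtain ⟨m, hm⟩ := (ht.eventually (eventually_le_nhds hε)).exists
  have hI := pk_int_pos hN μ m
  set I := ∫ Z, pk Z ^ m ∂μ with hIdef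
  obtain ⟨p0, hp0⟩ := poly_int μ m g hgc
  have hcpk : Continuous (fun Z : UG N => pk Z ^ m) := continuous_pk.pow m
  have hev : ∀ X : UG N, ev (X : MC N) p0 = ∫ Z, g (X * Z) * pk Z ^ m ∂μ := by
    intro X
    have := integral_mul_left_eq_self (μ := μ) (fun Y : UG N => g Y * pk (X⁻¹ * Y) ^ m) X
    simp only [inv_mul_cancel_left] at this
    rw [this, hp0]
    simp only [pk_shift]
  have hgpk : ∀ X : UG N, Integrable (fun Z => g (X * Z) * pk Z ^ m) μ := fun X =>
    integrable_cont μ ((hgc.comp (continuous_const_mul X)).mul hcpk)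
  have key : ∀ (G : UG N → ℝ) (b : UG N → ℝ), Continuous G → Continuous b → (∀ Z, |G Z| ≤ b Z) →
      |∫ Z, G Z * pk Z ^ m ∂μ| ≤ ∫ Z, b Z * pk Z ^ m ∂μ := by
    intro G b hG hb hGb
    refine (abs_integral_le_integral_abs).trans ?_
    refine integral_mono (integrable_cont μ (hG.mul hcpk).abs) (integrable_cont μ (hb.mul hcpk)) fun Z => ?_
    simp only [abs_mul, abs_of_nonneg (pow_nonneg (pk_nonneg Z) m)]
    exact mul_le_mul_of_nonneg_right (hGb Z) (pow_nonneg (pk_nonneg Z) m)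
  refine ⟨MvPolynomial.C I⁻¹ * p0, fun X Y => ?_, fun X => ?_⟩
  · rw [ev_mul, ev_mul, ev_C, ev_C, ← mul_sub, hev, hev, ← integral_sub (hgpk X) (hgpk Y), abs_mul,
      abs_of_pos (inv_pos.2 hI), inv_mul_le_iff₀ hI]
    simp only [← sub_mul]
    refine (key _ (fun _ => L * frob ((X : MC N) - (Y : MC N)))
      ((hgc.comp (continuous_const_mul X)).sub (hgc.comp (continuous_const_mul Y))) continuous_const
      fun Z => ?_).trans (le_of_eq ?_)
    · refine (hg _ _).trans (le_of_eq ?_)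
      rw [Submonoid.coe_mul, Submonoid.coe_mul, ← Matrix.sub_mul, frob_mul_right]
    · rw [integral_const_mul, mul_comm]
  · have h1 : g X = I⁻¹ * ∫ Z, g X * pk Z ^ m ∂μ := by
      rw [integral_const_mul, ← hIdef]; field_simp
    have hi2 : Integrable (fun Z => g X * pk Z ^ m) μ := integrable_cont μ (continuous_const.mul hcpk)
    rw [ev_mul, ev_C, h1, ← mul_sub, hev, ← integral_sub (hgpk X) hi2, abs_mul, abs_of_pos (inv_pos.2 hI)]
    simp only [← sub_mul]
    refine le_trans (mul_le_mul_of_nonneg_left (key _ (fun Z => L * frob ((Z : MC N) - 1))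
      ((hgc.comp (continuous_const_mul X)).sub continuous_const)
      (continuous_const.mul (continuous_frob (continuous_subtype_val.sub continuous_const)))
      fun Z => ?_) (inv_pos.2 hI).le) (le_trans (le_of_eq ?_) hm)
    · refine (hg _ _).trans (le_of_eq ?_)
      have : ((X * Z : UG N) : MC N) - (X : MC N) = (X : MC N) * ((Z : MC N) - 1) := by
        rw [Submonoid.coe_mul, Matrix.mul_sub, Matrix.mul_one]
      simp only [this, frob_mul_left]
    · rw [mul_left_comm, ← integral_const_mul L]
      congr 2
      funext Z
      ring

lemma mgf_bound {N : ℕ} (hN : 1 ≤ N) (μ : Measure (UG N)) [IsProbabilityMeasure μ] [μ.IsMulLeftInvariant]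
    (g : UG N → ℝ) (L : ℝ) (hL : 0 ≤ L)
    (hg : ∀ X Y : UG N, |g X - g Y| ≤ L * frob ((X : MC N) - (Y : MC N)))
    (hm : ∫ X, g X ∂μ = 0) (t : ℝ) :
    ∫ X, Real.exp (t * g X) ∂μ ≤ Real.exp (3 * t ^ 2 * L ^ 2 / N) := by
  have hgc := lip_cont hg
  have hge : Continuous (fun X : UG N => Real.exp (t * g X)) :=
    Real.continuous_exp.comp (continuous_const.mul hgc)
  have main : ∀ ε : ℝ, 0 < ε → ∫ X, Real.exp (t * g X) ∂μ ≤
      Real.exp (2 * |t| * ε + 3 * t ^ 2 * L ^ 2 / N) := by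
    intro ε hε
    obtain ⟨p, hpL, hpe⟩ := smooth hN μ g L hL hg ε hε
    set a := ∫ X : UG N, ev (X : MC N) p ∂μ with ha
    have haε : |a| ≤ ε := by
      have h1 : a = ∫ X : UG N, (ev (X : MC N) p - g X) ∂μ := by
        rw [integral_sub (integrable_cont μ (continuous_evU p)) (integrable_cont μ hgc), hm, sub_zero]
      rw [h1]
      refine (abs_integral_le_integral_abs).trans ?_
      refine (integral_mono (integrable_cont μ ((continuous_evU p).sub hgc).abs) (integrable_const ε) hpe).trans ?_
      simp
    set q : RPoly N := MvPolynomial.C t * (p - MvPolynomial.C a) with hq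
    have hqe : ∀ X : MC N, ev X q = t * (ev X p - a) := by
      intro X; rw [hq, ev_mul, ev_sub, ev_C, ev_C]
    have h1 := poly_bound hN μ q (|t| * L) (by positivity) ?_ ?_
    · have h2 : ∀ X : UG N, Real.exp (t * g X) ≤ Real.exp (2 * |t| * ε) * Real.exp (ev (X : MC N) q) := by
        intro X
        rw [← Real.exp_add]
        refine Real.exp_le_exp.2 ?_
        have h3 : t * g X = ev (X : MC N) q + (t * a - t * (ev (X : MC N) p - g X)) := by rw [hqe]; ring
        have h4 : t * a ≤ |t| * ε := (le_abs_self _).trans (by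
          rw [abs_mul]; exact mul_le_mul_of_nonneg_left haε (abs_nonneg t))
        have h5 : -(t * (ev (X : MC N) p - g X)) ≤ |t| * ε := (neg_le_abs _).trans (by
          rw [abs_mul]; exact mul_le_mul_of_nonneg_left (hpe X) (abs_nonneg t))
        rw [h3]; linarith
      have hi2 : Integrable (fun X : UG N => Real.exp (2 * |t| * ε) * Real.exp (ev (X : MC N) q)) μ :=
        integrable_cont μ (continuous_const.mul (continuous_exp_ev q))
      refine (integral_mono (integrable_cont μ hge) hi2 h2).trans ?_
      rw [integral_const_mul, Real.exp_add]
      refine mul_le_mul_of_nonneg_left (h1.trans (le_of_eq ?_)) (Real.exp_pos _).le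
      rw [mul_pow, sq_abs, mul_assoc]
    · intro X Y
      have : ev (X : MC N) q - ev (Y : MC N) q = t * (ev (X : MC N) p - ev (Y : MC N) p) := by
        rw [hqe, hqe]; ring
      rw [this, abs_mul, mul_assoc]
      exact mul_le_mul_of_nonneg_left (hpL X Y) (abs_nonneg t)
    · simp only [hqe]
      rw [integral_const_mul, integral_sub (integrable_cont μ (continuous_evU p)) (integrable_const a), ← ha]
      simp
  have hlim : Filter.Tendsto (fun ε : ℝ => Real.exp (2 * |t| * ε + 3 * t ^ 2 * L ^ 2 / N))
      (nhdsWithin 0 (Set.Ioi 0)) (nhds (Real.exp (3 * t ^ 2 * L ^ 2 / N))) := by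
    have : Continuous (fun ε : ℝ => Real.exp (2 * |t| * ε + 3 * t ^ 2 * L ^ 2 / N)) := by fun_prop
    have h := (this.tendsto 0).mono_left (nhdsWithin_le_nhds (s := Set.Ioi 0))
    rwa [mul_zero, zero_add] at h
  refine ge_of_tendsto hlim ?_
  filter_upwards [self_mem_nhdsWithin] with ε hε
  exact main ε hε

theorem gromov_milman_concentration_unitary :
    ∃ c : ℝ, 0 < c ∧ ∃ c₁ : ℝ, 0 < c₁ ∧
      ∀ (N : ℕ), 1 ≤ N →
      ∀ (μ : Measure (Matrix.unitaryGroup (Fin N) ℂ)), IsProbabilityMeasure μ →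
      (∀ g : Matrix.unitaryGroup (Fin N) ℂ, Measure.map (fun x => g * x) μ = μ) →
      ∀ (g : Matrix.unitaryGroup (Fin N) ℂ → ℝ) (L : ℝ),
        (∀ Ω₁ Ω₂ : Matrix.unitaryGroup (Fin N) ℂ,
          |g Ω₁ - g Ω₂| ≤
            L * frob ((Ω₁ : Matrix (Fin N) (Fin N) ℂ) - (Ω₂ : Matrix (Fin N) (Fin N) ℂ))) →
        (∫ x, g x ∂μ) = 0 →
        (∀ t : ℝ, ∫ x, Real.exp (t * g x) ∂μ ≤ Real.exp (c * t ^ 2 * L ^ 2 / N)) ∧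
        (∀ δ : ℝ, 0 < δ →
          (μ {x | δ ≤ g x}).toReal ≤ Real.exp (-c₁ * N * δ ^ 2 / L ^ 2)) := by
  refine ⟨3, by norm_num, 1 / 12, by norm_num, ?_⟩
  intro N hN μ hP hinv g L hg hm
  haveI := hP
  haveI : μ.IsMulLeftInvariant := ⟨hinv⟩
  have hN0 : (0 : ℝ) < N := by exact_mod_cast (by omega : 0 < N)
  have hL : 0 ≤ L := by
    have h1 := (abs_nonneg _).trans (hg (sc N Real.pi) 1)
    have h2 : 0 < frob ((sc N Real.pi : MC N) - ((1 : UG N) : MC N)) := by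
      refine (frob_nonneg _).lt_of_ne fun h => ?_
      have h3 := frob_eq_zero h.symm
      have h4 := congrFun (congrFun h3 ⟨0, by omega⟩) ⟨0, by omega⟩
      rw [sc_coe, mul_comm, Complex.exp_pi_mul_I] at h4
      norm_num at h4
    exact nonneg_of_mul_nonneg_left h1 h2
  have hM := mgf_bound hN μ g L hL hg hm
  refine ⟨hM, fun δ hδ => ?_⟩
  rcases hL.eq_or_lt with h0 | hLp
  · rw [← h0]
    simp only [ne_eq, OfNat.ofNat_ne_zero, not_false_eq_true, zero_pow, div_zero, Real.exp_zero]
    exact prob_le_one.trans_eq rfl |> ENNReal.toReal_mono ENNReal.one_ne_top |>.trans (by simp)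
  · have hgc := lip_cont hg
    set t : ℝ := N * δ / (6 * L ^ 2) with ht
    have ht0 : 0 ≤ t := by positivity
    have h1 := ProbabilityTheory.measure_ge_le_exp_mul_mgf (μ := μ) (X := g) δ ht0
      (integrable_cont μ (Real.continuous_exp.comp (continuous_const.mul hgc)))
    refine h1.trans ?_
    refine (mul_le_mul_of_nonneg_left (hM t) (Real.exp_pos _).le).trans ?_
    rw [← Real.exp_add]
    refine Real.exp_le_exp.2 (le_of_eq ?_)
    rw [ht]
    field_simp
    ring
end

section
/- Let N ≥ 1, T > 0 and 0 ≤ g ≤ 1/2. Let A ⊆ {1, …, N}² be a symmetric set of index pairs with (i, i) ∉ A for all i, and let (γ_{ij}) be a symmetric array of reals with 0 ≤ γ_{ij} ≤ g. Let z : [0, T] → ℝ^N be continuous with z_i(t) ≠ z_j(t) for all t and all (i, j) ∈ A, and let u : [0, T] → ℝ^N be continuously differentiable with u(0) = 0, satisfying for every i and t the ODE u_i'(t) = Σ_{j : (i,j) ∈ A} (1 − γ_{ij}) (u_j(t) − u_i(t)) / ( N (z_i(t) − z_j(t))² ) + (1/N) Σ_{j : (i,j) ∈ A} γ_{ij} /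 (z_i(t) − z_j(t)). Then for every t ∈ [0, T], (1/N) Σ_{i=1}^N u_i(t)² ≤ t g². -/
open Finset

theorem energy_estimate_interpolating_ode
    (N : ℕ) (hN : 1 ≤ N) (T : ℝ) (hT : 0 < T) (g : ℝ) (hg0 : 0 ≤ g) (hg : g ≤ 1 / 2)
    (A : Finset (Fin N × Fin N))
    (hsymm : ∀ i j : Fin N, (i, j) ∈ A → (j, i) ∈ A)
    (hdiag : ∀ i : Fin N, (i, i) ∉ A)
    (γ : Fin N → Fin N → ℝ)
    (hγsymm : ∀ i j, γ i j = γ j i)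
    (hγ0 : ∀ i j, 0 ≤ γ i j) (hγg : ∀ i j, γ i j ≤ g)
    (z : ℝ → Fin N → ℝ)
    (hzcont : ∀ i, ContinuousOn (fun t => z t i) (Set.Icc 0 T))
    (hzsep : ∀ t ∈ Set.Icc (0 : ℝ) T, ∀ i j : Fin N, (i, j) ∈ A → z t i ≠ z t j)
    (u : ℝ → Fin N → ℝ)
    (hu0 : ∀ i, u 0 i = 0)
    (hode : ∀ t ∈ Set.Icc (0 : ℝ) T, ∀ i : Fin N,
      HasDerivAt (fun s => u s i)
        ((∑ j ∈ Finset.univ.filter (fun j : Fin N => (i, j) ∈ A),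
            (1 - γ i j) * (u t j - u t i) / ((N : ℝ) * (z t i - z t j) ^ 2)) +
          (1 / (N : ℝ)) * ∑ j ∈ Finset.univ.filter (fun j : Fin N => (i, j) ∈ A),
            γ i j / (z t i - z t j)) t) :
    ∀ t ∈ Set.Icc (0 : ℝ) T, (1 / (N : ℝ)) * ∑ i, (u t i) ^ 2 ≤ t * g ^ 2 := by
  have hNpos : (0 : ℝ) < N := by exact_mod_cast hN
  -- the derivative bound
  have key : ∀ t ∈ Set.Icc (0 : ℝ) T, ∑ i, 2 * u t i *
      ((∑ j ∈ Finset.univ.filter (fun j : Fin N => (i, j) ∈ A),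
            (1 - γ i j) * (u t j - u t i) / ((N : ℝ) * (z t i - z t j) ^ 2)) +
          (1 / (N : ℝ)) * ∑ j ∈ Finset.univ.filter (fun j : Fin N => (i, j) ∈ A),
            γ i j / (z t i - z t j)) ≤ N * g ^ 2 := by
    intro t ht
    set F : Fin N → Fin N → ℝ := fun i j => if (i, j) ∈ A then
      u t i * ((1 - γ i j) * (u t j - u t i) / ((N : ℝ) * (z t i - z t j) ^ 2)
        + (1 / (N : ℝ)) * (γ i j / (z t i - z t j))) else 0 with hF
    have h1 : ∀ i, 2 * u t i *
      ((∑ j ∈ Finset.univ.filter (fun j : Fin N => (i, j) ∈ A),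
            (1 - γ i j) * (u t j - u t i) / ((N : ℝ) * (z t i - z t j) ^ 2)) +
          (1 / (N : ℝ)) * ∑ j ∈ Finset.univ.filter (fun j : Fin N => (i, j) ∈ A),
            γ i j / (z t i - z t j)) = 2 * ∑ j, F i j := by
      intro i
      rw [hF]
      simp only
      rw [← Finset.sum_filter, Finset.mul_sum, ← Finset.sum_add_distrib, mul_assoc,
        Finset.mul_sum]
    have h2 : ∀ i j, F i j + F j i ≤ g ^ 2 / N := by
      intro i j
      by_cases hA : (i, j) ∈ A
      · have hA' := hsymm i j hA
        have hd : z t i - z t j ≠ 0 := sub_ne_zero.mpr (hzsep t ht i j hA)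
        have hd' : z t j - z t i ≠ 0 := sub_ne_zero.mpr (hzsep t ht j i hA')
        simp only [hF, hA, hA', if_true, hγsymm j i]
        have e : u t i * ((1 - γ i j) * (u t j - u t i) / ((N : ℝ) * (z t i - z t j) ^ 2)
            + (1 / (N : ℝ)) * (γ i j / (z t i - z t j))) +
            u t j * ((1 - γ i j) * (u t i - u t j) / ((N : ℝ) * (z t j - z t i) ^ 2)
            + (1 / (N : ℝ)) * (γ i j / (z t j - z t i))) =
            (-(1 - γ i j) * ((u t i - u t j) / (z t i - z t j)) ^ 2
              + γ i j * ((u t i - u t j) / (z t i - z t j))) / N := by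
          rw [← neg_sub (z t i) (z t j)]
          field_simp
          ring
        rw [e]
        gcongr
        generalize (u t i - u t j) / (z t i - z t j) = w
        have a := hγ0 i j
        have b := hγg i j
        nlinarith [sq_nonneg (w - γ i j), mul_nonneg (sub_nonneg.2 (b.trans hg)) (sq_nonneg w),
          mul_self_le_mul_self a b, sq_nonneg g]
      · have hA' : (j, i) ∉ A := fun h => hA (hsymm j i h)
        simp only [hF, hA, hA', if_false, add_zero]
        positivity
    rw [Finset.sum_congr rfl (fun i _ => h1 i), ← Finset.mul_sum]
    have h3 : 2 * ∑ i, ∑ j, F i j = ∑ i, ∑ j, (F i j + F j i) := by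
      simp only [Finset.sum_add_distrib]
      rw [Finset.sum_comm (f := fun i j => F j i)]
      ring
    rw [h3]
    calc ∑ i, ∑ j, (F i j + F j i) ≤ ∑ _i : Fin N, ∑ _j : Fin N, g ^ 2 / N :=
          Finset.sum_le_sum fun i _ => Finset.sum_le_sum fun j _ => h2 i j
      _ = N * g ^ 2 := by
          simp only [Finset.sum_const, Finset.card_univ, Fintype.card_fin, nsmul_eq_mul]
          field_simp
  have hder : ∀ t ∈ Set.Icc (0 : ℝ) T, HasDerivAt (fun s => s * (N * g ^ 2) - ∑ i, (u s i) ^ 2)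
      (1 * (N * g ^ 2) - ∑ i, 2 * u t i *
      ((∑ j ∈ Finset.univ.filter (fun j : Fin N => (i, j) ∈ A),
            (1 - γ i j) * (u t j - u t i) / ((N : ℝ) * (z t i - z t j) ^ 2)) +
          (1 / (N : ℝ)) * ∑ j ∈ Finset.univ.filter (fun j : Fin N => (i, j) ∈ A),
            γ i j / (z t i - z t j))) t := by
    intro t ht
    refine ((hasDerivAt_id t).mul_const _).sub (HasDerivAt.fun_sum fun i _ => ?_)
    simpa using (hode t ht i).fun_pow 2
  have hmono : MonotoneOn (fun s => s * (N * g ^ 2) - ∑ i, (u s i) ^ 2) (Set.Icc 0 T) := by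
    refine monotoneOn_of_deriv_nonneg (convex_Icc 0 T)
      (fun t ht => (hder t ht).continuousAt.continuousWithinAt)
      (fun t ht => (hder t (interior_subset ht)).differentiableAt.differentiableWithinAt) ?_
    intro t ht
    rw [(hder t (interior_subset ht)).deriv]
    have := key t (interior_subset ht)
    linarith
  intro t ht
  have h := hmono (Set.left_mem_Icc.2 hT.le) ht ht.1
  simp only [hu0] at h
  norm_num at h
  rw [one_div, inv_mul_le_iff₀ hNpos]
  linarith
end
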